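/- arXiv:1010.0751 — 3 statements merged into one kernel-verified Lean document; each statement's English description precedes it below -/
import Mathlib

section
/- Let β be an irrational real number and λ1, λ2, λ3 ≥ 0 with (λ1, λ3) ≠ (0, 0). Define L_M := log((1 + √(1 − 4λ1λ3))/2) if 4λ1λ3 ≤ 1 and L_M := (1/2)·log(λ1λ3) if 4λ1λ3 > 1. Then for every E ∈ ℝ there exists ε₀ > 0 such that for all real ε with |ε| > ε₀, the complexified Lyapunov exponent of the extended Harper transfer-matrix cocycle satisfies L(β, A^E_ε) = L_M + 2π|ε|. -/
open MeasureTheory Filter Complex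
open scoped ENNReal Real NNReal

noncomputable section

attribute [local instance] Matrix.frobeniusNormedAddCommGroup

/-- The `n`-step cocycle iterate `D^{(n)}_β(x) = D(x+(n-1)β)⋯D(x)`. -/
def cocycleIter (D : ℝ → Matrix (Fin 2) (Fin 2) ℂ) (β : ℝ) : ℕ → ℝ → Matrix (Fin 2) (Fin 2) ℂ
  | 0, _ => 1
  | n + 1, x => cocycleIter D β n (x + β) * D x

/-- The extended-real-valued integral `∫₀¹ log (g x) dx`, with value `-∞` allowed
(the positive and negative parts are integrated separately; `log 0 = -∞`). -/
def logIntegral (g : ℝ → ℝ) : EReal :=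
  ((∫⁻ x in Set.Ioc (0 : ℝ) 1, ENNReal.ofReal (Real.log (g x))) : EReal) -
    ((∫⁻ x in Set.Ioc (0 : ℝ) 1,
        if g x = 0 then (⊤ : ℝ≥0∞) else ENNReal.ofReal (-Real.log (g x))) : EReal)

/-- The Lyapunov exponent `L(β, D) = inf_{n ≥ 1} (1/n) ∫₀¹ log ‖D^{(n)}_β(x)‖ dx ∈ ℝ ∪ {-∞}`. -/
def lyapunov (β : ℝ) (D : ℝ → Matrix (Fin 2) (Fin 2) ℂ) : EReal :=
  ⨅ n : ℕ, ((((n : ℝ) + 1)⁻¹ : ℝ) : EReal) * logIntegral fun x => ‖cocycleIter D β (n + 1) x‖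

/-- `c(z) = λ₃ e^{-2πi(z+β/2)} + λ₂ + λ₁ e^{2πi(z+β/2)}` of extended Harper's model. -/
def harperC (lam1 lam2 lam3 β : ℝ) (z : ℂ) : ℂ :=
  (lam3 : ℂ) * Complex.exp (-(2 * (π : ℂ) * Complex.I) * (z + (β : ℂ) / 2)) + (lam2 : ℂ) +
    (lam1 : ℂ) * Complex.exp ((2 * (π : ℂ) * Complex.I) * (z + (β : ℂ) / 2))

/-- `c̃(z) = λ₃ e^{2πi(z+β/2)} + λ₂ + λ₁ e^{-2πi(z+β/2)}`, the entire extension of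
`x ↦ conj (c x)` from `ℝ`. -/
def harperCt (lam1 lam2 lam3 β : ℝ) (z : ℂ) : ℂ :=
  (lam3 : ℂ) * Complex.exp ((2 * (π : ℂ) * Complex.I) * (z + (β : ℂ) / 2)) + (lam2 : ℂ) +
    (lam1 : ℂ) * Complex.exp (-(2 * (π : ℂ) * Complex.I) * (z + (β : ℂ) / 2))

/-- The transfer matrix `A^E(z) = [[E - 2cos(2πz), -c̃(z-β)], [c(z), 0]]`. -/
def harperA (lam1 lam2 lam3 β : ℝ) (E : ℂ) (z : ℂ) : Matrix (Fin 2) (Fin 2) ℂ :=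
  !![E - 2 * Complex.cos (2 * (π : ℂ) * z), -harperCt lam1 lam2 lam3 β (z - (β : ℂ));
     harperC lam1 lam2 lam3 β z, 0]

/-- Partial products of `‖1 - z q ^ k‖⁻¹` along an irrational rotation grow at most like `e ^ N`,
uniformly in `z` on a disc of radius `x < 1`. -/
theorem exists_prod_inv_norm_one_sub_le {q : ℂ} (hq : ‖q‖ = 1) (hq1 : ∀ m : ℕ, 0 < m → q ^ m ≠ 1)
    {x : ℝ} (hx0 : 0 ≤ x) (hx : x < 1) :
    ∃ C > 0, ∀ z : ℂ, ‖z‖ ≤ x → ∀ N : ℕ,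
      ∏ k ∈ Finset.range N, ‖1 - z * q ^ k‖⁻¹ ≤ C * Real.exp N := by
  obtain ⟨M, hM⟩ : ∃ M : ℕ, x ^ M < 1 - x := exists_pow_lt_of_lt_one (by linarith) hx
  refine ⟨Real.exp (∑ j ∈ Finset.range (M + 1), 2 / ‖q ^ j - 1‖), Real.exp_pos _, ?_⟩
  intro z hz N
  have hfactor (k : ℕ) : ‖1 - z * q ^ k‖⁻¹ ≤
      Real.exp ((∑ j ∈ Finset.range (M + 1), (z * q ^ k) ^ j / j).re + 1) := by
    set y := z * q ^ k with hy
    have hyx : ‖y‖ ≤ x := by simpa [hy, hq] using hz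
    have hy1 : ‖y‖ < 1 := hyx.trans_lt hx
    have hne : 1 - y ≠ 0 := by
      intro h
      rw [← sub_eq_zero.1 h] at hy1
      simp at hy1
    have htaylor : logTaylor (M + 1) (-y) = -∑ j ∈ Finset.range (M + 1), y ^ j / j := by
      rw [logTaylor, ← Finset.sum_neg_distrib]
      refine Finset.sum_congr rfl fun j _ => ?_
      rw [neg_pow y, ← mul_assoc, ← pow_add, show j + 1 + j = 2 * j + 1 by ring, pow_succ, pow_mul]
      norm_num
      ring
    have hlog := norm_log_one_sub_inv_add_logTaylor_neg_le M hy1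
    rw [htaylor] at hlog
    have hone : ‖y‖ ^ (M + 1) * (1 - ‖y‖)⁻¹ / (M + 1) ≤ 1 := by
      have h1 : ‖y‖ ^ (M + 1) ≤ 1 - ‖y‖ :=
        calc ‖y‖ ^ (M + 1) ≤ x ^ (M + 1) := by gcongr
          _ ≤ x ^ M := pow_le_pow_of_le_one hx0 hx.le (Nat.le_succ M)
          _ ≤ 1 - ‖y‖ := by linarith
      have h2 : ‖y‖ ^ (M + 1) * (1 - ‖y‖)⁻¹ ≤ 1 := by
        rw [← div_eq_mul_inv]
        exact (div_le_one (by linarith)).2 h1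
      rw [div_le_one (by positivity)]
      have : (0 : ℝ) ≤ M := by positivity
      linarith
    have hre := (le_abs_self _).trans ((abs_re_le_norm _).trans (hlog.trans hone))
    rw [← norm_inv, ← exp_log (inv_ne_zero hne), norm_exp]
    apply Real.exp_le_exp.2
    simp only [add_re, neg_re] at hre
    linarith
  have hgeom (j : ℕ) (hj : j ∈ Finset.range (M + 1)) :
      ‖∑ k ∈ Finset.range N, (z * q ^ k) ^ j / j‖ ≤ 2 / ‖q ^ j - 1‖ := by
    rcases Nat.eq_zero_or_pos j with rfl | hj0
    · simp
    have hsum : ∑ k ∈ Finset.range N, (z * q ^ k) ^ j / j =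
        z ^ j / j * (((q ^ j) ^ N - 1) / (q ^ j - 1)) := by
      rw [← geom_sum_eq (hq1 j hj0), Finset.mul_sum]
      refine Finset.sum_congr rfl fun k _ => ?_
      rw [mul_pow, ← pow_mul, ← pow_mul, mul_comm k j]
      ring
    have hj1 : (1 : ℝ) ≤ j := by exact_mod_cast hj0
    have hz1 : ‖z ^ j / (j : ℂ)‖ ≤ 1 := by
      rw [norm_div, norm_pow, Complex.norm_natCast, div_le_one (by linarith)]
      exact (pow_le_one₀ (norm_nonneg z) (hz.trans hx.le)).trans hj1
    have hN : ‖(q ^ j) ^ N - 1‖ ≤ 2 := by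
      refine (norm_sub_le _ _).trans ?_
      simp [hq]
      norm_num
    rw [hsum, norm_mul, norm_div _ (q ^ j - 1)]
    calc _ ≤ 1 * (2 / ‖q ^ j - 1‖) := by gcongr
      _ = _ := one_mul _
  calc ∏ k ∈ Finset.range N, ‖1 - z * q ^ k‖⁻¹
      ≤ ∏ k ∈ Finset.range N,
          Real.exp ((∑ j ∈ Finset.range (M + 1), (z * q ^ k) ^ j / j).re + 1) :=
        Finset.prod_le_prod (fun _ _ => by positivity) fun k _ => hfactor k
    _ = Real.exp ((∑ j ∈ Finset.range (M + 1),
          ∑ k ∈ Finset.range N, (z * q ^ k) ^ j / j).re) * Real.exp N := by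
        rw [← Real.exp_sum, Finset.sum_add_distrib, Real.exp_add, ← re_sum, Finset.sum_comm]
        simp
    _ ≤ _ := by
        gcongr
        exact (re_le_norm _).trans ((norm_sum_le _ _).trans (Finset.sum_le_sum hgeom))

section SkewProduct

variable {𝔸 : Type*} [NormedRing 𝔸] [NormedAlgebra ℂ 𝔸]

/-- The iterates `B(q^(n-1) w) ⋯ B(q w) B(w)` of a skew product over the rotation `w ↦ q w`. -/
def skewIter (q : ℂ) (B : ℂ → 𝔸) : ℕ → ℂ → 𝔸
  | 0, _ => 1
  | n + 1, w => skewIter q B n (q * w) * B w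

/-- The quadratic polynomial `b₀ + w b₁ + w² b₂`. -/
def quadPoly (b₀ b₁ b₂ : 𝔸) (w : ℂ) : 𝔸 := b₀ + w • b₁ + w ^ 2 • b₂

/-- The inverse of `1 - v b₀` when `b₀` is a root of `(X - μ₁)(X - μ₂)`. -/
def quadResolvent (μ₁ μ₂ : ℂ) (b₀ : 𝔸) (v : ℂ) : 𝔸 :=
  ((1 - v * μ₁) * (1 - v * μ₂))⁻¹ • ((1 - v * (μ₁ + μ₂)) • 1 + v • b₀)

/-- The coefficient of `w ^ k` in the generating function `∑ uⁿ Bₙ(w)` of the iterates `Bₙ` of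
`quadPoly b₀ b₁ b₂`, written in terms of `R v = (1 - v b₀)⁻¹`. -/
def genCoeff (q : ℂ) (b₁ b₂ : 𝔸) (R : ℂ → 𝔸) (u : ℂ) : ℕ → 𝔸
  | 0 => R u
  | 1 => u • (R u * b₁ * R (u * q))
  | k + 2 => u • ((q ^ (k + 1) • (genCoeff q b₁ b₂ R u (k + 1) * b₁) +
      q ^ k • (genCoeff q b₁ b₂ R u k * b₂)) * R (u * q ^ (k + 2)))

theorem quadResolvent_mul_one_sub {μ₁ μ₂ : ℂ} {b₀ : 𝔸}
    (hb : b₀ * b₀ = (μ₁ + μ₂) • b₀ - (μ₁ * μ₂) • 1) {v : ℂ} (h₁ : 1 - v * μ₁ ≠ 0)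
    (h₂ : 1 - v * μ₂ ≠ 0) : quadResolvent μ₁ μ₂ b₀ v * (1 - v • b₀) = 1 := by
  have h : ((1 - v * (μ₁ + μ₂)) • (1 : 𝔸) + v • b₀) * (1 - v • b₀) =
      ((1 - v * μ₁) * (1 - v * μ₂)) • (1 : 𝔸) := by
    simp only [add_mul, mul_sub, mul_one, one_mul, smul_mul_assoc, mul_smul_comm, hb]
    module
  rw [quadResolvent, smul_mul_assoc, h, smul_smul, inv_mul_cancel₀ (mul_ne_zero h₁ h₂), one_smul]

theorem norm_quadResolvent_le (μ₁ μ₂ : ℂ) (b₀ : 𝔸) (v : ℂ) {D : ℝ}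
    (hD : (1 + ‖v‖ * (‖μ₁‖ + ‖μ₂‖)) * ‖(1 : 𝔸)‖ + ‖v‖ * ‖b₀‖ ≤ D) :
    ‖quadResolvent μ₁ μ₂ b₀ v‖ ≤ D * (‖1 - v * μ₁‖⁻¹ * ‖1 - v * μ₂‖⁻¹) := by
  rw [quadResolvent, norm_smul, norm_inv, norm_mul, mul_inv, mul_comm D]
  gcongr
  refine le_trans (norm_add_le _ _) (le_trans ?_ hD)
  rw [norm_smul, norm_smul]
  gcongr
  refine (norm_sub_le _ _).trans ?_
  rw [norm_one, norm_mul]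
  gcongr
  exact norm_add_le _ _

theorem differentiableAt_quadResolvent {μ₁ μ₂ : ℂ} (b₀ : 𝔸) {v : ℂ} (h₁ : 1 - v * μ₁ ≠ 0)
    (h₂ : 1 - v * μ₂ ≠ 0) : DifferentiableAt ℂ (quadResolvent μ₁ μ₂ b₀) v := by
  have := mul_ne_zero h₁ h₂
  unfold quadResolvent
  fun_prop (disch := assumption)

variable {q : ℂ} {b₀ b₁ b₂ : 𝔸} {R : ℂ → 𝔸} {u : ℂ}

theorem norm_genCoeff_le (hq : ‖q‖ = 1) {ψ : ℕ → ℝ} (hψ : ∀ k, 1 ≤ ψ k)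
    (hR : ∀ k, ‖R (u * q ^ k)‖ ≤ ψ k) {M : ℝ} (hM : 1 ≤ M)
    (hu : ‖u‖ * (‖b₁‖ + ‖b₂‖) ≤ M) (k : ℕ) :
    ‖genCoeff q b₁ b₂ R u k‖ ≤ M ^ k * ∏ j ∈ Finset.range (k + 1), ψ j := by
  have hψ0 (k : ℕ) : 0 ≤ ψ k := zero_le_one.trans (hψ k)
  have hu1 : ‖u‖ * ‖b₁‖ ≤ M :=
    le_trans (mul_le_mul_of_nonneg_left (le_add_of_nonneg_right (norm_nonneg _))
      (norm_nonneg _)) hu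
  induction k using Nat.twoStepInduction with
  | zero => simpa [genCoeff] using hR 0
  | one =>
    have h0 : ‖R u‖ ≤ ψ 0 := by simpa using hR 0
    have h1 : ‖R (u * q)‖ ≤ ψ 1 := by simpa using hR 1
    rw [genCoeff, norm_smul, Finset.prod_range_succ, Finset.prod_range_one, pow_one]
    calc ‖u‖ * ‖R u * b₁ * R (u * q)‖ ≤ ‖u‖ * (‖R u‖ * ‖b₁‖ * ‖R (u * q)‖) := by
          gcongr
          exact (norm_mul_le _ _).trans (by gcongr; exact norm_mul_le _ _)
      _ = (‖u‖ * ‖b₁‖) * (‖R u‖ * ‖R (u * q)‖) := by ring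
      _ ≤ M * (ψ 0 * ψ 1) := by
          have := hψ0 0
          gcongr
  | more k ih₀ ih₁ =>
    set P := M ^ (k + 1) * ∏ j ∈ Finset.range (k + 1 + 1), ψ j with hP
    have hP0 : 0 ≤ P := mul_nonneg (by positivity) (Finset.prod_nonneg fun j _ => hψ0 j)
    have hle : M ^ k * ∏ j ∈ Finset.range (k + 1), ψ j ≤ P := by
      rw [hP, Finset.prod_range_succ _ (k + 1)]
      have h := Finset.prod_nonneg fun j (_ : j ∈ Finset.range (k + 1)) => hψ0 j
      exact mul_le_mul (pow_le_pow_right₀ hM (Nat.le_succ k))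
        (le_mul_of_one_le_right h (hψ _)) h (by positivity)
    have ih₀ := ih₀.trans hle
    rw [genCoeff, norm_smul]
    calc ‖u‖ * ‖(q ^ (k + 1) • (genCoeff q b₁ b₂ R u (k + 1) * b₁) +
            q ^ k • (genCoeff q b₁ b₂ R u k * b₂)) * R (u * q ^ (k + 2))‖
        ≤ ‖u‖ * ((P * ‖b₁‖ + P * ‖b₂‖) * ψ (k + 2)) := by
          gcongr
          refine (norm_mul_le _ _).trans ?_
          gcongr
          · refine (norm_add_le _ _).trans ?_
            rw [norm_smul, norm_smul, norm_pow, norm_pow, hq, one_pow, one_pow, one_mul, one_mul]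
            exact add_le_add ((norm_mul_le _ _).trans (by gcongr))
              ((norm_mul_le _ _).trans (by gcongr))
          · exact hR _
      _ = (‖u‖ * (‖b₁‖ + ‖b₂‖)) * (P * ψ (k + 2)) := by ring
      _ ≤ M * (P * ψ (k + 2)) := by
          have := hψ0 (k + 2)
          gcongr
      _ = M ^ (k + 2) * ∏ j ∈ Finset.range (k + 2 + 1), ψ j := by
          rw [hP, Finset.prod_range_succ _ (k + 2)]
          ring

theorem differentiableOn_genCoeff (hq : ‖q‖ = 1) (b₁ b₂ : 𝔸) {r : ℝ}
    (hR : DifferentiableOn ℂ R (Metric.ball 0 r)) (k : ℕ) :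
    DifferentiableOn ℂ (fun u => genCoeff q b₁ b₂ R u k) (Metric.ball 0 r) := by
  have hRk (k : ℕ) : DifferentiableOn ℂ (fun u => R (u * q ^ k)) (Metric.ball 0 r) :=
    hR.comp (by fun_prop) fun u hu => by simpa [hq] using hu
  induction k using Nat.twoStepInduction with
  | zero => simpa [genCoeff] using hR
  | one =>
    have := hRk 1
    simp only [pow_one] at this
    simp only [genCoeff]
    exact differentiableOn_id.smul ((hR.mul_const b₁).mul this)
  | more k ih₀ ih₁ =>
    simp only [genCoeff]
    exact differentiableOn_id.smul ((((ih₁.mul_const b₁).const_smul (q ^ (k + 1))).add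
      ((ih₀.mul_const b₂).const_smul (q ^ k))).mul (hRk (k + 2)))

theorem genCoeff_mul_one_sub (hR : ∀ k : ℕ, R (u * q ^ k) * (1 - (u * q ^ k) • b₀) = 1) (k : ℕ) :
    genCoeff q b₁ b₂ R u (k + 2) * (1 - (u * q ^ (k + 2)) • b₀) =
      u • (q ^ (k + 1) • (genCoeff q b₁ b₂ R u (k + 1) * b₁) +
        q ^ k • (genCoeff q b₁ b₂ R u k * b₂)) := by
  rw [genCoeff, smul_mul_assoc, mul_assoc, hR, mul_one]

/-- If the coefficients `G k` satisfy the recurrence of a generating function of the iterates of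
`B = quadPoly b₀ b₁ b₂`, then `H(w) = ∑ w^k G_k` solves `H(w) = 1 + u H(q w) B(w)`. -/
theorem tsum_eq_one_add_of_recurrence {G : ℕ → 𝔸}
    (hG0 : G 0 * (1 - u • b₀) = 1) (hG1 : G 1 * (1 - (u * q) • b₀) = u • (G 0 * b₁))
    (hG : ∀ k : ℕ, G (k + 2) * (1 - (u * q ^ (k + 2)) • b₀) =
      u • (q ^ (k + 1) • (G (k + 1) * b₁) + q ^ k • (G k * b₂))) {w : ℂ}
    (hw : Summable fun k => w ^ k • G k) (hqw : Summable fun k => (q * w) ^ k • G k) :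
    ∑' k, w ^ k • G k = 1 + u • ((∑' k, (q * w) ^ k • G k) * quadPoly b₀ b₁ b₂ w) := by
  have hsum := hqw.hasSum
  set S := ∑' k, (q * w) ^ k • G k
  have hsum1 : HasSum (fun k => (q * w) ^ (k + 1) • G (k + 1)) (S - G 0) := by
    simpa using (hasSum_nat_add_iff' 1).2 hsum
  have hterm (k : ℕ) : w ^ k • G k - u • ((q * w) ^ k • G k * b₀) =
      w ^ k • (G k * (1 - (u * q ^ k) • b₀)) := by
    rw [mul_sub, mul_one, smul_sub, mul_smul_comm, smul_mul_assoc, smul_smul, smul_smul]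
    congr 2
    ring
  have hshift : HasSum (fun k => w ^ (k + 2) • (G (k + 2) * (1 - (u * q ^ (k + 2)) • b₀)))
      (u • ((S - G 0) * (w • b₁) + S * (w ^ 2 • b₂))) := by
    have h := ((hsum1.mul_right (w • b₁)).add (hsum.mul_right (w ^ 2 • b₂))).const_smul u
    refine h.congr_fun ?_
    intro k
    rw [hG]
    simp only [smul_mul_assoc, mul_smul_comm, smul_smul, smul_add]
    congr 2 <;> ring_nf
  have htotal :=
    (hasSum_nat_add_iff (f := fun k => w ^ k • (G k * (1 - (u * q ^ k) • b₀))) 2).1 hshift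
  have hdirect := hw.hasSum.sub ((hsum.mul_right b₀).const_smul u)
  simp only [hterm] at hdirect
  have hkey := hdirect.unique htotal
  rw [Finset.sum_range_succ, Finset.sum_range_one, sub_eq_iff_eq_add] at hkey
  simp only [pow_zero, pow_one, mul_one, one_smul, hG0, hG1] at hkey
  rw [hkey, quadPoly]
  simp only [mul_add, sub_mul, smul_add, smul_sub, mul_smul_comm]
  rw [smul_comm w u]
  abel

/-- Cauchy estimate for the iterates of a skew product whose generating function `H(u, w)` extends
holomorphically in `u` to a disc. -/
theorem norm_skewIter_le_of_generating [CompleteSpace 𝔸] (hq : ‖q‖ = 1) {B : ℂ → 𝔸}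
    {H : ℂ → ℂ → 𝔸} {r t t' K : ℝ} (ht : 0 < t) (htt' : t < t')
    (hdiff : ∀ w, ‖w‖ ≤ r → DifferentiableOn ℂ (fun u => H u w) (Metric.ball 0 t'))
    (hbound : ∀ w, ‖w‖ ≤ r → ∀ u ∈ Metric.ball (0 : ℂ) t', ‖H u w‖ ≤ K)
    (heq : ∀ w, ‖w‖ ≤ r → ∀ u ∈ Metric.ball (0 : ℂ) t', H u w = 1 + u • (H u (q * w) * B w))
    (n : ℕ) {w : ℂ} (hw : ‖w‖ ≤ r) : ‖skewIter q B n w‖ ≤ K * t⁻¹ ^ n := by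
  have hsphere {u : ℂ} (hu : u ∈ Metric.sphere (0 : ℂ) t) : u ∈ Metric.ball (0 : ℂ) t' := by
    simp only [mem_sphere_zero_iff_norm, mem_ball_zero_iff] at hu ⊢
    linarith
  have hne {u : ℂ} (hu : u ∈ Metric.sphere (0 : ℂ) t) : u ≠ 0 := by
    rintro rfl
    simp at hu
    linarith
  have hint (n : ℕ) {w : ℂ} (hw : ‖w‖ ≤ r) :
      CircleIntegrable (fun u => u⁻¹ ^ (n + 1) • H u w) 0 t := by
    refine ContinuousOn.circleIntegrable ht.le (ContinuousOn.smul ?_ ?_)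
    · exact (continuousOn_id.inv₀ fun u hu => hne hu).pow _
    · exact (hdiff w hw).continuousOn.mono fun u hu => hsphere hu
  have hpow (n : ℕ) : (∮ u in C(0, t), u⁻¹ ^ (n + 2) • (1 : 𝔸)) = 0 := by
    rw [circleIntegral.integral_smul_const]
    have h := circleIntegral.integral_sub_zpow_of_ne (n := -((n : ℤ) + 2)) (by omega) 0 0 t
    simp only [sub_zero, zpow_neg] at h
    have : (fun u : ℂ => u⁻¹ ^ (n + 2)) = fun u : ℂ => (u ^ ((n : ℤ) + 2))⁻¹ := by
      ext u
      rw [inv_pow]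
      norm_cast
    rw [this, h, zero_smul]
  have hrep (n : ℕ) : ∀ w, ‖w‖ ≤ r →
      skewIter q B n w = (2 * π * I : ℂ)⁻¹ • ∮ u in C(0, t), u⁻¹ ^ (n + 1) • H u w := by
    induction n with
    | zero =>
      intro w hw
      have hd : DiffContOnCl ℂ (fun u => H u w) (Metric.ball 0 t) := by
        refine DifferentiableOn.diffContOnCl ((hdiff w hw).mono ?_)
        rw [closure_ball _ ht.ne']
        exact Metric.closedBall_subset_ball htt'
      have h := hd.two_pi_i_inv_smul_circleIntegral_sub_inv_smul (Metric.mem_ball_self ht)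
      simp only [sub_zero] at h
      have h0 := heq w hw 0 (Metric.mem_ball_self (ht.trans htt'))
      simp only [zero_smul, add_zero] at h0
      simp only [zero_add, pow_one, skewIter]
      rw [h, h0]
    | succ n ih =>
      intro w hw
      have hqw : ‖q * w‖ ≤ r := by simpa [hq] using hw
      have hcongr : (∮ u in C(0, t), u⁻¹ ^ (n + 1 + 1) • H u w) =
          ∮ u in C(0, t), (u⁻¹ ^ (n + 2) • (1 : 𝔸) + (u⁻¹ ^ (n + 1) • H u (q * w)) * B w) := by
        refine circleIntegral.integral_congr ht.le fun u hu => ?_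
        rw [heq w hw u (hsphere hu), smul_add, smul_smul, pow_succ _ (n + 1), mul_assoc,
          inv_mul_cancel₀ (hne hu), mul_one, smul_mul_assoc]
      have hmul : (∮ u in C(0, t), (u⁻¹ ^ (n + 1) • H u (q * w)) * B w) =
          (∮ u in C(0, t), u⁻¹ ^ (n + 1) • H u (q * w)) * B w := by
        simp only [circleIntegral, ← smul_mul_assoc]
        exact ((ContinuousLinearMap.mul ℂ 𝔸).flip (B w)).intervalIntegral_comp_comm
          (hint n hqw).out
      have hint1 : CircleIntegrable (fun u : ℂ => u⁻¹ ^ (n + 2) • (1 : 𝔸)) 0 t := by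
        refine ContinuousOn.circleIntegrable ht.le (ContinuousOn.smul ?_ continuousOn_const)
        exact (continuousOn_id.inv₀ fun u hu => hne hu).pow _
      have hint2 : CircleIntegrable (fun u => (u⁻¹ ^ (n + 1) • H u (q * w)) * B w) 0 t := by
        refine ContinuousOn.circleIntegrable ht.le (ContinuousOn.mul ?_ continuousOn_const)
        refine ContinuousOn.smul ((continuousOn_id.inv₀ fun u hu => hne hu).pow _) ?_
        exact (hdiff _ hqw).continuousOn.mono fun u hu => hsphere hu
      rw [hcongr, circleIntegral.integral_add hint1 hint2, hpow, zero_add, hmul, skewIter,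
        ih _ hqw, smul_mul_assoc]
  rw [hrep n w hw]
  have h := circleIntegral.norm_two_pi_i_inv_smul_integral_le_of_norm_le_const (c := 0) ht.le
    (f := fun u => u⁻¹ ^ (n + 1) • H u w) (C := t⁻¹ ^ (n + 1) * K) ?_
  · refine h.trans (le_of_eq ?_)
    rw [pow_succ]
    field_simp
  · intro u hu
    rw [norm_smul, norm_pow, norm_inv, mem_sphere_zero_iff_norm.1 hu]
    have := hbound w hw u (hsphere hu)
    gcongr

/-- Near the fixed point `w = 0` of an irrational rotation, the iterates of a polynomial skew
product grow no faster than the powers of its constant term. -/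
theorem exists_norm_skewIter_le [CompleteSpace 𝔸] (hq : ‖q‖ = 1)
    (hq1 : ∀ m : ℕ, 0 < m → q ^ m ≠ 1) {μ₁ μ₂ : ℂ}
    (hb : b₀ * b₀ = (μ₁ + μ₂) • b₀ - (μ₁ * μ₂) • 1) {ρ : ℝ} (hρ : 0 < ρ) (h₁ : ‖μ₁‖ ≤ ρ)
    (h₂ : ‖μ₂‖ ≤ ρ) (b₁ b₂ : 𝔸) :
    ∃ r > 0, ∀ s, ρ < s → ∃ C, ∀ (n : ℕ) (w : ℂ), ‖w‖ ≤ r →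
      ‖skewIter q (quadPoly b₀ b₁ b₂) n w‖ ≤ C * s ^ n := by
  set D : ℝ := 4 + ((1 + ρ⁻¹ * (ρ + ρ)) * ‖(1 : 𝔸)‖ + ρ⁻¹ * ‖b₀‖) with hD
  set M : ℝ := 1 + ρ⁻¹ * (‖b₁‖ + ‖b₂‖)
  have hD4 : 4 ≤ D := le_add_of_nonneg_right (by positivity)
  have hM1 : 1 ≤ M := le_add_of_nonneg_right (by positivity)
  set Q : ℝ := M * D * Real.exp 2 with hQ
  have hQ0 : 0 < Q := by positivity
  refine ⟨1 / (2 * Q), by positivity, fun s hs => ?_⟩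
  obtain ⟨σ, hσ, hσs⟩ := exists_between hs
  have hσ0 : 0 < σ := hρ.trans hσ
  have hs0 : 0 < s := hσ0.trans hσs
  obtain ⟨C, hC0, hC⟩ := exists_prod_inv_norm_one_sub_le hq hq1 (x := ρ / σ) (by positivity)
    ((div_lt_one hσ0).2 hσ)
  set R := quadResolvent μ₁ μ₂ b₀
  set U := Metric.ball (0 : ℂ) σ⁻¹ with hU
  have hUnorm {u : ℂ} (hu : u ∈ U) : ‖u‖ ≤ σ⁻¹ := (mem_ball_zero_iff.1 hu).le
  have hUrot {u : ℂ} (hu : u ∈ U) (k : ℕ) : u * q ^ k ∈ U := by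
    simpa [hU, hq] using hu
  have hsmall {u μ : ℂ} (hu : u ∈ U) (hμ : ‖μ‖ ≤ ρ) : ‖u * μ‖ ≤ ρ / σ := by
    rw [norm_mul, div_eq_mul_inv, mul_comm ρ]
    have := hUnorm hu
    gcongr
  have hsmall1 {u μ : ℂ} (hu : u ∈ U) (hμ : ‖μ‖ ≤ ρ) : ‖u * μ‖ < 1 :=
    (hsmall hu hμ).trans_lt ((div_lt_one hσ0).2 hσ)
  have hne {u μ : ℂ} (hu : u ∈ U) (hμ : ‖μ‖ ≤ ρ) : 1 - u * μ ≠ 0 := by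
    intro h
    have := hsmall1 hu hμ
    rw [← sub_eq_zero.1 h] at this
    simp at this
  have hhalf {u μ : ℂ} (hu : u ∈ U) (hμ : ‖μ‖ ≤ ρ) : 2⁻¹ ≤ ‖1 - u * μ‖⁻¹ := by
    refine inv_anti₀ (norm_pos_iff.2 (hne hu hμ)) ?_
    have h := norm_sub_le 1 (u * μ)
    rw [norm_one] at h
    linarith [hsmall1 hu hμ]
  have hRdiff : DifferentiableOn ℂ R U := fun u hu =>
    (differentiableAt_quadResolvent b₀ (hne hu h₁) (hne hu h₂)).differentiableWithinAt
  have hRinv {u : ℂ} (hu : u ∈ U) (k : ℕ) : R (u * q ^ k) * (1 - (u * q ^ k) • b₀) = 1 :=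
    quadResolvent_mul_one_sub hb (hne (hUrot hu k) h₁) (hne (hUrot hu k) h₂)
  have hsρ : σ⁻¹ ≤ ρ⁻¹ := inv_anti₀ hρ hσ.le
  have hG {u : ℂ} (hu : u ∈ U) (k : ℕ) :
      ‖genCoeff q b₁ b₂ R u k‖ ≤ C ^ 2 * Q * Q ^ k := by
    set ψ : ℕ → ℝ := fun k => D * (‖1 - u * q ^ k * μ₁‖⁻¹ * ‖1 - u * q ^ k * μ₂‖⁻¹) with hψ
    have hψ1 (k : ℕ) : 1 ≤ ψ k := by
      have := hhalf (hUrot hu k) h₁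
      have := hhalf (hUrot hu k) h₂
      calc (1 : ℝ) = 4 * (2⁻¹ * 2⁻¹) := by norm_num
        _ ≤ D * (‖1 - u * q ^ k * μ₁‖⁻¹ * ‖1 - u * q ^ k * μ₂‖⁻¹) := by gcongr
    have hRψ (k : ℕ) : ‖R (u * q ^ k)‖ ≤ ψ k := by
      refine norm_quadResolvent_le μ₁ μ₂ b₀ _ ?_
      have := (hUnorm (hUrot hu k)).trans hsρ
      rw [hD]
      refine le_trans ?_ (le_add_of_nonneg_left (by norm_num))
      gcongr
    have huM : ‖u‖ * (‖b₁‖ + ‖b₂‖) ≤ M := by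
      have := (hUnorm hu).trans hsρ
      refine le_trans ?_ (le_add_of_nonneg_left zero_le_one)
      gcongr
    have hprod (N : ℕ) : ∏ j ∈ Finset.range N, ψ j ≤ C ^ 2 * (D * Real.exp 2) ^ N := by
      have hswap (μ : ℂ) (k : ℕ) : u * q ^ k * μ = u * μ * q ^ k := by ring
      simp only [hψ, Finset.prod_mul_distrib, hswap, Finset.prod_const, Finset.card_range]
      calc _ ≤ D ^ N * ((C * Real.exp N) * (C * Real.exp N)) := by
            gcongr
            · exact hC _ (hsmall hu h₁) N
            · exact hC _ (hsmall hu h₂) N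
        _ = _ := by
            rw [mul_pow, ← Real.exp_nat_mul, mul_comm (N : ℝ) 2, two_mul, Real.exp_add]
            ring
    calc _ ≤ M ^ k * ∏ j ∈ Finset.range (k + 1), ψ j := norm_genCoeff_le hq hψ1 hRψ hM1 huM k
      _ ≤ M ^ (k + 1) * (C ^ 2 * (D * Real.exp 2) ^ (k + 1)) := by
          gcongr
          · exact Nat.le_succ k
          · exact hprod _
      _ = C ^ 2 * Q * Q ^ k := by
          rw [hQ]
          ring_nf
  clear_value Q
  have hterm {w : ℂ} (hw : ‖w‖ ≤ 1 / (2 * Q)) {u : ℂ} (hu : u ∈ U) (k : ℕ) :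
      ‖w ^ k • genCoeff q b₁ b₂ R u k‖ ≤ C ^ 2 * Q * (1 / 2) ^ k := by
    rw [norm_smul, norm_pow]
    calc ‖w‖ ^ k * ‖genCoeff q b₁ b₂ R u k‖ ≤ (1 / (2 * Q)) ^ k * (C ^ 2 * Q * Q ^ k) := by
          gcongr
          exact hG hu k
      _ = C ^ 2 * Q * ((1 / (2 * Q)) * Q) ^ k := by
          rw [mul_pow, mul_left_comm]
      _ = C ^ 2 * Q * (1 / 2) ^ k := by
          congr 2
          field_simp
  have hgeom : HasSum (fun k : ℕ => C ^ 2 * Q * (1 / 2 : ℝ) ^ k) (C ^ 2 * Q * 2) :=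
    hasSum_geometric_two.mul_left _
  have hsummable {w : ℂ} (hw : ‖w‖ ≤ 1 / (2 * Q)) {u : ℂ} (hu : u ∈ U) :
      Summable fun k => w ^ k • genCoeff q b₁ b₂ R u k :=
    hgeom.summable.of_norm_bounded (hterm hw hu)
  refine ⟨C ^ 2 * Q * 2, fun n w hw => ?_⟩
  rw [← inv_inv s]
  refine norm_skewIter_le_of_generating hq (H := fun u w => ∑' k, w ^ k • genCoeff q b₁ b₂ R u k)
    (inv_pos.2 hs0) (inv_strictAnti₀ hσ0 hσs) (fun w hw => ?_) (fun w hw u hu => ?_)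
    (fun w hw u hu => ?_) n hw
  · refine differentiableOn_tsum_of_summable_norm hgeom.summable (fun k => ?_) Metric.isOpen_ball
      fun k u hu => hterm hw hu k
    exact (differentiableOn_genCoeff hq b₁ b₂ hRdiff k).const_smul (w ^ k)
  · exact tsum_of_norm_bounded hgeom (hterm hw hu)
  · have hqw : ‖q * w‖ ≤ 1 / (2 * Q) := by simpa [hq] using hw
    refine tsum_eq_one_add_of_recurrence ?_ ?_ (genCoeff_mul_one_sub (hRinv hu))
      (hsummable hw hu) (hsummable hqw hu)
    · simpa [genCoeff] using hRinv hu 0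
    · have := hRinv hu 1
      rw [pow_one] at this
      change u • (R u * b₁ * R (u * q)) * _ = u • (R u * b₁)
      rw [smul_mul_assoc, mul_assoc, this, mul_one]

end SkewProduct

theorem logIntegral_mono {f g : ℝ → ℝ} (hf : ∀ x, 0 ≤ f x) (hfg : ∀ x, f x ≤ g x) :
    logIntegral f ≤ logIntegral g := by
  refine EReal.sub_le_sub ?_ ?_
  · refine EReal.coe_ennreal_le_coe_ennreal_iff.2 (lintegral_mono fun x => ?_)
    refine ENNReal.ofReal_le_ofReal_iff'.2 ?_
    rcases (hf x).eq_or_lt with h | h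
    · right
      simp [← h]
    · exact Or.inl (Real.log_le_log h (hfg x))
  · refine EReal.coe_ennreal_le_coe_ennreal_iff.2 (lintegral_mono fun x => ?_)
    rcases (hf x).eq_or_lt with h | h
    · simp [← h]
    · simp only [h.ne', (h.trans_le (hfg x)).ne', if_false]
      exact ENNReal.ofReal_le_ofReal (neg_le_neg (Real.log_le_log h (hfg x)))

theorem logIntegral_eq_integral {g : ℝ → ℝ}
    (hg : ∀ᵐ x ∂volume.restrict (Set.Ioc (0 : ℝ) 1), g x ≠ 0)
    (hint : IntegrableOn (fun x => Real.log (g x)) (Set.Ioc 0 1)) :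
    logIntegral g = ((∫ x in Set.Ioc (0 : ℝ) 1, Real.log (g x) : ℝ) : EReal) := by
  have hneg : (∫⁻ x in Set.Ioc (0 : ℝ) 1,
      if g x = 0 then (⊤ : ℝ≥0∞) else ENNReal.ofReal (-Real.log (g x))) =
      ∫⁻ x in Set.Ioc (0 : ℝ) 1, ENNReal.ofReal (-Real.log (g x)) := by
    refine lintegral_congr_ae (hg.mono fun x hx => ?_)
    simp [hx]
  have h₁ : (∫⁻ x in Set.Ioc (0 : ℝ) 1, ENNReal.ofReal (Real.log (g x))) ≠ ⊤ :=
    hint.lintegral_lt_top.ne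
  have h₂ : (∫⁻ x in Set.Ioc (0 : ℝ) 1, ENNReal.ofReal (-Real.log (g x))) ≠ ⊤ :=
    hint.neg.lintegral_lt_top.ne
  rw [logIntegral, hneg, integral_eq_lintegral_pos_part_sub_lintegral_neg_part hint,
    EReal.coe_sub, EReal.coe_ennreal_toReal h₁, EReal.coe_ennreal_toReal h₂]

theorem logIntegral_le_of_le_exp {g : ℝ → ℝ} {K : ℝ} (hg : ∀ x, 0 ≤ g x)
    (hK : ∀ x, g x ≤ Real.exp K) : logIntegral g ≤ (K : EReal) := by
  refine (logIntegral_mono hg hK).trans_eq ?_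
  rw [logIntegral_eq_integral (by simp [Real.exp_ne_zero]) (by simp)]
  simp

/-- The mean value inequality for the subharmonic function `log ‖f‖`. -/
theorem log_norm_le_circleAverage {f : ℂ → ℂ} (hf : Differentiable ℂ f) (h0 : f 0 ≠ 0) {r : ℝ}
    (hr : 0 < r) : Real.log ‖f 0‖ ≤ Real.circleAverage (fun z => Real.log ‖f z‖) 0 r := by
  have hana : AnalyticOnNhd ℂ f (Metric.closedBall 0 |r|) := fun z _ => hf.analyticAt z
  rw [AnalyticOnNhd.circleAverage_log_norm hr.ne' hana h0]
  refine le_add_of_nonneg_left (finsum_nonneg fun u => ?_)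
  by_cases hu : u ∈ Metric.closedBall (0 : ℂ) |r|
  · refine mul_nonneg (by exact_mod_cast MeromorphicOn.AnalyticOnNhd.divisor_nonneg hana u) ?_
    rw [abs_of_pos hr, mem_closedBall_zero_iff] at hu
    rw [zero_sub, norm_neg]
    rcases (norm_nonneg u).eq_or_lt with h | h
    · simp [← h]
    · exact Real.log_nonneg (by rw [← div_eq_mul_inv]; exact (one_le_div h).2 hu)
  · simp [hu]

theorem ae_circleMap_ne_zero {f : ℂ → ℂ} (hf : Differentiable ℂ f) (h0 : f 0 ≠ 0) {r : ℝ}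
    (hr : 0 < r) : ∀ᵐ θ : ℝ, f (circleMap 0 r θ) ≠ 0 := by
  have hana : AnalyticOnNhd ℂ f Set.univ := fun z _ => hf.analyticAt z
  have hmem : f ⁻¹' {0}ᶜ ∈ codiscreteWithin (Metric.sphere (0 : ℂ) |r|) :=
    codiscreteWithin_mono (Set.subset_univ _) (hana.preimage_zero_mem_codiscrete (x := 0) h0)
  have h : circleMap 0 r ⁻¹' (f ⁻¹' {0}ᶜ) ∈ codiscrete ℝ :=
    circleMap_preimage_codiscrete hr.ne' hmem
  have hae := ae_restrict_le_codiscreteWithin (μ := volume) MeasurableSet.univ h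
  rw [Measure.restrict_univ] at hae
  exact hae

/-- Jensen's inequality for the logarithmic integral of an entire function over a circle. -/
theorem log_norm_le_logIntegral {f : ℂ → ℂ} (hf : Differentiable ℂ f) (h0 : f 0 ≠ 0) {r : ℝ}
    (hr : 0 < r) :
    (Real.log ‖f 0‖ : EReal) ≤ logIntegral fun x => ‖f (circleMap 0 r (2 * π * x))‖ := by
  have hπ : (2 * π : ℝ) ≠ 0 := by positivity
  have hci : CircleIntegrable (fun z => Real.log ‖f z‖) 0 r :=
    MeromorphicOn.circleIntegrable_log_norm fun z _ => (hf.analyticAt z).meromorphicAt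
  have hint : IntegrableOn (fun x : ℝ => Real.log ‖f (circleMap 0 r (2 * π * x))‖)
      (Set.Ioc 0 1) := by
    have := IntervalIntegrable.comp_mul_left (c := 2 * π) hci
    rw [zero_div, div_self hπ] at this
    exact (intervalIntegrable_iff_integrableOn_Ioc_of_le zero_le_one).1 this
  have hae : ∀ᵐ x : ℝ, f (circleMap 0 r (2 * π * x)) ≠ 0 := by
    have := (Measure.quasiMeasurePreserving_smul (volume : Measure ℝ) hπ).ae
      (ae_circleMap_ne_zero hf h0 hr)
    exact this
  rw [logIntegral_eq_integral (ae_restrict_of_ae (by simpa using hae)) hint]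
  refine EReal.coe_le_coe_iff.2 ((log_norm_le_circleAverage hf h0 hr).trans_eq ?_)
  rw [← intervalIntegral.integral_of_le zero_le_one,
    intervalIntegral.integral_comp_mul_left (fun θ => Real.log ‖f (circleMap 0 r θ)‖) hπ]
  simp [Real.circleAverage]

theorem log_norm_le_logIntegral_of_normedSpace {V : Type*} [NormedAddCommGroup V]
    [NormedSpace ℂ V] {F : ℂ → V} (hF : Differentiable ℂ F) (h0 : F 0 ≠ 0) {r : ℝ} (hr : 0 < r) :
    (Real.log ‖F 0‖ : EReal) ≤ logIntegral fun x => ‖F (circleMap 0 r (2 * π * x))‖ := by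
  obtain ⟨φ, hφ, hφ0⟩ := exists_dual_vector'' ℂ (F 0)
  have hnorm : ‖φ (F 0)‖ = ‖F 0‖ := by simp [hφ0]
  have h := log_norm_le_logIntegral (f := fun w => φ (F w)) (φ.differentiable.comp hF)
    (norm_pos_iff.1 (hnorm ▸ norm_pos_iff.2 h0)) hr
  rw [hnorm] at h
  refine h.trans (logIntegral_mono (fun _ => norm_nonneg _) fun x => ?_)
  exact (φ.le_of_opNorm_le hφ _).trans_eq (one_mul _)

section SkewLyapunov

variable {𝔸 : Type*} [NormedRing 𝔸]

theorem skewIter_zero_right (q : ℂ) (B : ℂ → 𝔸) (n : ℕ) : skewIter q B n 0 = B 0 ^ n := by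
  induction n with
  | zero => simp [skewIter]
  | succ n ih => rw [skewIter, mul_zero, ih, pow_succ]

variable [NormedAlgebra ℂ 𝔸] {q : ℂ}

theorem differentiable_skewIter (q : ℂ) {B : ℂ → 𝔸} (hB : Differentiable ℂ B) (n : ℕ) :
    Differentiable ℂ (skewIter q B n) := by
  induction n with
  | zero => exact differentiable_const 1
  | succ n ih => exact (ih.comp (differentiable_id.const_mul q)).mul hB

theorem differentiable_quadPoly (b₀ b₁ b₂ : 𝔸) : Differentiable ℂ (quadPoly b₀ b₁ b₂) := by
  unfold quadPoly
  fun_prop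

theorem norm_pow_le_norm_pow_of_mul_eq_smul {b v : 𝔸} {μ : ℂ} (hv : v ≠ 0) (h : b * v = μ • v)
    (n : ℕ) : ‖μ‖ ^ n ≤ ‖b ^ n‖ := by
  have hpow : b ^ n * v = μ ^ n • v := by
    induction n with
    | zero => simp
    | succ n ih => rw [pow_succ, mul_assoc, h, mul_smul_comm, ih, smul_smul, pow_succ']
  refine le_of_mul_le_mul_right ?_ (norm_pos_iff.2 hv)
  rw [← norm_pow, ← norm_smul, ← hpow]
  exact norm_mul_le _ _

/-- On small circles, the exponent of a polynomial skew product over an irrational rotation,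
normalised by the radius, is governed by the spectral radius of its constant term. -/
theorem exists_iInf_logIntegral_skewIter_eq [CompleteSpace 𝔸] (hq : ‖q‖ = 1)
    (hq1 : ∀ m : ℕ, 0 < m → q ^ m ≠ 1) {μ₁ μ₂ : ℂ} {b₀ : 𝔸}
    (hb : b₀ * b₀ = (μ₁ + μ₂) • b₀ - (μ₁ * μ₂) • 1) (hμ₁ : 0 < ‖μ₁‖) (hμ : ‖μ₂‖ ≤ ‖μ₁‖)
    (hb₀ : b₀ ≠ μ₂ • 1) (b₁ b₂ : 𝔸) :
    ∃ r₀ > (0 : ℝ), ∀ r : ℝ, 0 < r → r ≤ r₀ →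
      ⨅ n : ℕ, ((((n : ℝ) + 1)⁻¹ : ℝ) : EReal) * logIntegral (fun x =>
        ‖(r : ℂ)⁻¹ ^ (n + 1) •
          skewIter q (quadPoly b₀ b₁ b₂) (n + 1) (circleMap 0 r (2 * π * x))‖) =
      ((Real.log ‖μ₁‖ - Real.log r : ℝ) : EReal) := by
  obtain ⟨r₀, hr₀, hgrowth⟩ := exists_norm_skewIter_le hq hq1 hb hμ₁ le_rfl hμ b₁ b₂
  refine ⟨r₀, hr₀, fun r hr hrr₀ => le_antisymm ?_ (le_iInf fun n => ?_)⟩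
  · have hle (s : ℝ) (hs : ‖μ₁‖ < s) : (⨅ n : ℕ, ((((n : ℝ) + 1)⁻¹ : ℝ) : EReal) *
        logIntegral (fun x => ‖(r : ℂ)⁻¹ ^ (n + 1) •
          skewIter q (quadPoly b₀ b₁ b₂) (n + 1) (circleMap 0 r (2 * π * x))‖)) ≤
        ((Real.log s - Real.log r : ℝ) : EReal) := by
      obtain ⟨C, hC⟩ := hgrowth s hs
      have hs0 : 0 < s := hμ₁.trans hs
      have hlim : Tendsto (fun n : ℕ => ((n : ℝ) + 1)⁻¹ * Real.log (max C 1) +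
          (Real.log s - Real.log r)) atTop (nhds (Real.log s - Real.log r)) := by
        have h := (tendsto_one_div_add_atTop_nhds_zero_nat (𝕜 := ℝ)).mul_const
          (Real.log (max C 1))
        simpa using h.add_const (Real.log s - Real.log r)
      refine ge_of_tendsto' ((continuous_coe_real_ereal.tendsto _).comp hlim) fun n => ?_
      refine (iInf_le _ n).trans ?_
      have hn : (0 : ℝ) < n + 1 := by positivity
      have hbound := logIntegral_le_of_le_exp
        (g := fun x => ‖(r : ℂ)⁻¹ ^ (n + 1) •
          skewIter q (quadPoly b₀ b₁ b₂) (n + 1) (circleMap 0 r (2 * π * x))‖)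
        (K := Real.log (max C 1) + (n + 1) * (Real.log s - Real.log r))
        (fun _ => norm_nonneg _) fun x => by
          have hexp : Real.exp (Real.log (max C 1) + (n + 1) * (Real.log s - Real.log r)) =
              r⁻¹ ^ (n + 1) * (max C 1 * s ^ (n + 1)) := by
            rw [Real.exp_add, Real.exp_log (by positivity), ← Real.log_div hs0.ne' hr.ne']
            have := Real.exp_nat_mul (Real.log (s / r)) (n + 1)
            push_cast at this
            rw [this, Real.exp_log (by positivity), div_pow, inv_pow]
            field_simp
          rw [hexp, norm_smul, norm_pow, norm_inv, norm_real, Real.norm_of_nonneg hr.le]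
          gcongr
          refine (hC _ _ (by simpa [abs_of_pos hr] using hrr₀)).trans ?_
          gcongr
          exact le_max_left _ _
      refine (mul_le_mul_of_nonneg_left hbound (by exact_mod_cast (inv_pos.2 hn).le)).trans_eq ?_
      rw [← EReal.coe_mul]
      simp only [Function.comp_apply]
      congr 1
      field_simp
    have hlim : Tendsto (fun s => ((Real.log s - Real.log r : ℝ) : EReal))
        (nhdsWithin ‖μ₁‖ (Set.Ioi ‖μ₁‖)) (nhds ((Real.log ‖μ₁‖ - Real.log r : ℝ) : EReal)) :=
      ((continuous_coe_real_ereal.tendsto _).comp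
        ((Real.continuousAt_log hμ₁.ne').tendsto.sub_const _)).mono_left nhdsWithin_le_nhds
    exact ge_of_tendsto hlim (eventually_mem_nhdsWithin.mono hle)
  · have hn : (0 : ℝ) < n + 1 := by positivity
    set F : ℂ → 𝔸 := fun w => (r : ℂ)⁻¹ ^ (n + 1) • skewIter q (quadPoly b₀ b₁ b₂) (n + 1) w
      with hF
    have hFdiff : Differentiable ℂ F :=
      (differentiable_skewIter q (differentiable_quadPoly b₀ b₁ b₂) (n + 1)).const_smul
        ((r : ℂ)⁻¹ ^ (n + 1))
    have hpow : ‖μ₁‖ ^ (n + 1) ≤ ‖b₀ ^ (n + 1)‖ := by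
      refine norm_pow_le_norm_pow_of_mul_eq_smul (v := b₀ - μ₂ • 1) (sub_ne_zero.2 hb₀) ?_ _
      rw [mul_sub, hb, mul_smul_comm, mul_one]
      module
    have hF0 : (‖μ₁‖ / r) ^ (n + 1) ≤ ‖F 0‖ := by
      have : quadPoly b₀ b₁ b₂ 0 = b₀ := by simp [quadPoly]
      simp only [hF]
      rw [skewIter_zero_right, this, norm_smul, norm_pow, norm_inv, norm_real,
        Real.norm_of_nonneg hr.le, div_pow, div_eq_inv_mul, inv_pow]
      gcongr
    have hF0' : 0 < (‖μ₁‖ / r) ^ (n + 1) := by positivity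
    have hJ := log_norm_le_logIntegral_of_normedSpace hFdiff
      (norm_pos_iff.1 (hF0'.trans_le hF0)) hr
    have hlog : (n + 1) * (Real.log ‖μ₁‖ - Real.log r) ≤ Real.log ‖F 0‖ := by
      refine le_trans (le_of_eq ?_) (Real.log_le_log hF0' hF0)
      rw [Real.log_pow, Real.log_div hμ₁.ne' hr.ne']
      push_cast
      rfl
    calc ((Real.log ‖μ₁‖ - Real.log r : ℝ) : EReal)
        = (((n : ℝ) + 1)⁻¹ : ℝ) * (((n + 1) * (Real.log ‖μ₁‖ - Real.log r) : ℝ) : EReal) := by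
          rw [← EReal.coe_mul, inv_mul_cancel_left₀ hn.ne']
      _ ≤ _ := mul_le_mul_of_nonneg_left ((EReal.coe_le_coe_iff.2 hlog).trans hJ)
          (by exact_mod_cast (inv_pos.2 hn).le)

end SkewLyapunov

/-- The roots of `X² + X + p`, ordered by modulus. -/
theorem exists_roots_norm (p : ℝ) :
    ∃ μ₁ μ₂ : ℂ, μ₁ + μ₂ = -1 ∧ μ₁ * μ₂ = p ∧ 0 < ‖μ₁‖ ∧ ‖μ₂‖ ≤ ‖μ₁‖ ∧
      Real.log ‖μ₁‖ = if 4 * p ≤ 1 then Real.log ((1 + √(1 - 4 * p)) / 2)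
        else Real.log p / 2 := by
  split_ifs with hp
  · set s := √(1 - 4 * p)
    have hs0 : 0 ≤ s := Real.sqrt_nonneg _
    have hs2 : s ^ 2 = 1 - 4 * p := Real.sq_sqrt (by linarith)
    have hn₁ : ‖((-(1 + s) / 2 : ℝ) : ℂ)‖ = (1 + s) / 2 := by
      rw [norm_real, Real.norm_eq_abs, neg_div, abs_neg, abs_of_nonneg (by positivity)]
    refine ⟨((-(1 + s) / 2 : ℝ) : ℂ), ((-(1 - s) / 2 : ℝ) : ℂ), ?_, ?_, ?_, ?_, ?_⟩
    · push_cast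
      ring
    · norm_cast
      linear_combination -(1 / 4) * hs2
    · rw [hn₁]
      positivity
    · rw [hn₁, norm_real, Real.norm_eq_abs, abs_le]
      constructor <;> linarith
    · rw [hn₁]
  · push Not at hp
    set s := √(4 * p - 1)
    have hs2 : s ^ 2 = 4 * p - 1 := Real.sq_sqrt (by linarith)
    have hp0 : 0 < p := by linarith
    have hnorm (t : ℝ) (ht : t ^ 2 = 4 * p - 1) : ‖(⟨-1 / 2, t / 2⟩ : ℂ)‖ = √p := by
      rw [Complex.norm_def, normSq_mk]
      congr 1
      linear_combination (1 / 4) * ht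
    refine ⟨⟨-1 / 2, s / 2⟩, ⟨-1 / 2, -s / 2⟩, ?_, ?_, ?_, ?_, ?_⟩
    · apply Complex.ext <;> simp
      ring
    · apply Complex.ext
      · simp
        linear_combination (1 / 4) * hs2
      · simp
        ring
    · rw [hnorm s hs2]
      positivity
    · rw [hnorm s hs2, hnorm (-s) (by rw [neg_sq, hs2])]
    · rw [hnorm s hs2, Real.log_sqrt hp0.le]

theorem exp_two_pi_mul_I_pow_ne_one {β : ℝ} (hβ : Irrational β) (m : ℕ) (hm : 0 < m) :
    cexp (2 * π * β * I) ^ m ≠ 1 := by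
  intro h
  rw [← Complex.exp_nat_mul, Complex.exp_eq_one_iff] at h
  obtain ⟨k, hk⟩ := h
  have hne : (2 * π * I : ℂ) ≠ 0 := by simp [Real.pi_ne_zero]
  have hkm : ((m * β : ℝ) : ℂ) = ((k : ℝ) : ℂ) := by
    refine mul_right_cancel₀ hne ?_
    push_cast
    linear_combination hk
  exact ((hβ.natCast_mul hm.ne').ne_int k) (by exact_mod_cast hkm)

section MatrixCocycle

attribute [local instance] Matrix.frobeniusNormedRing Matrix.frobeniusNormedAlgebra

theorem circleMap_two_pi_mul_add (r x β : ℝ) : circleMap 0 r (2 * π * (x + β)) =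
    cexp (2 * π * β * I) * circleMap 0 r (2 * π * x) := by
  simp only [circleMap, zero_add]
  rw [mul_left_comm, ← Complex.exp_add]
  congr 2
  push_cast
  ring

theorem norm_cocycleIter_eq_norm_skewIter {D : ℝ → Matrix (Fin 2) (Fin 2) ℂ} {β r : ℝ}
    (hr : 0 < r) {B : ℂ → Matrix (Fin 2) (Fin 2) ℂ}
    (hD : ∀ x, D x = (circleMap 0 r (2 * π * x))⁻¹ • B (circleMap 0 r (2 * π * x))) (n : ℕ)
    (x : ℝ) : ‖cocycleIter D β n x‖ =
      ‖(r : ℂ)⁻¹ ^ n • skewIter (cexp (2 * π * β * I)) B n (circleMap 0 r (2 * π * x))‖ := by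
  have hex : ∃ c : ℂ, ‖c‖ = r⁻¹ ^ n ∧ cocycleIter D β n x =
      c • skewIter (cexp (2 * π * β * I)) B n (circleMap 0 r (2 * π * x)) := by
    induction n generalizing x with
    | zero => exact ⟨1, by simp [cocycleIter, skewIter]⟩
    | succ n ih =>
      obtain ⟨c, hc, hcx⟩ := ih (x + β)
      refine ⟨c * (circleMap 0 r (2 * π * x))⁻¹, ?_, ?_⟩
      · simp [hc, abs_of_pos hr, pow_succ]
      · rw [cocycleIter, hcx, hD, circleMap_two_pi_mul_add, skewIter, smul_mul_smul_comm]
  obtain ⟨c, hc, hcx⟩ := hex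
  rw [hcx, norm_smul, norm_smul, hc]
  simp [abs_of_pos hr]

theorem harperA_eq_smul_quadPoly (lam1 lam2 lam3 β E x ε : ℝ) :
    harperA lam1 lam2 lam3 β (E : ℂ) ((x : ℂ) + (ε : ℂ) * I) =
      (circleMap 0 (Real.exp (-(2 * π * ε))) (2 * π * x))⁻¹ •
        quadPoly !![-1, -(lam1 * cexp (π * β * I)); lam3 * (cexp (π * β * I))⁻¹, 0]
          !![(E : ℂ), -lam2; lam2, 0]
          !![-1, -(lam3 * (cexp (π * β * I))⁻¹); lam1 * cexp (π * β * I), 0]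
          (circleMap 0 (Real.exp (-(2 * π * ε))) (2 * π * x)) := by
  have hw : circleMap 0 (Real.exp (-(2 * π * ε))) (2 * π * x) =
      cexp (2 * π * I * (x + ε * I)) := by
    rw [circleMap, zero_add, ofReal_exp, ← Complex.exp_add]
    congr 1
    push_cast
    linear_combination (-2 * π * ε : ℂ) * I_sq
  rw [hw]
  set z : ℂ := x + ε * I
  have hcos : 2 * Complex.cos (2 * π * z) =
      cexp (2 * π * I * z) + (cexp (2 * π * I * z))⁻¹ := by
    rw [two_cos, ← Complex.exp_neg]
    congr 2 <;> ring
  have hc : harperC lam1 lam2 lam3 β z = lam3 * ((cexp (2 * π * I * z))⁻¹ *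
      (cexp (π * β * I))⁻¹) + lam2 + lam1 * (cexp (2 * π * I * z) * cexp (π * β * I)) := by
    rw [harperC, ← Complex.exp_neg, ← Complex.exp_neg, ← Complex.exp_add, ← Complex.exp_add]
    congr 4 <;> ring
  have hct : harperCt lam1 lam2 lam3 β (z - β) = lam3 * (cexp (2 * π * I * z) *
      (cexp (π * β * I))⁻¹) + lam2 + lam1 * ((cexp (2 * π * I * z))⁻¹ * cexp (π * β * I)) := by
    rw [harperCt, ← Complex.exp_neg, ← Complex.exp_neg, ← Complex.exp_add, ← Complex.exp_add]
    congr 4 <;> ring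
  rw [harperA, hcos, hc, hct]
  have hw0 := Complex.exp_ne_zero (2 * π * I * z)
  have he0 := Complex.exp_ne_zero (π * β * I)
  generalize cexp (2 * π * I * z) = w at *
  generalize cexp (π * β * I) = e at *
  ext i j
  fin_cases i <;> fin_cases j <;> simp [quadPoly] <;> field_simp <;> ring

theorem exists_lyapunov_harperA_eq (β lam1 lam2 lam3 E : ℝ) (hβ : Irrational β)
    (hpos : (lam1, lam3) ≠ (0, 0)) :
    ∃ ε₀ > (0 : ℝ), ∀ ε : ℝ, ε₀ < ε →
      lyapunov β (fun x : ℝ => harperA lam1 lam2 lam3 β (E : ℂ) ((x : ℂ) + (ε : ℂ) * I)) =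
        (((if 4 * lam1 * lam3 ≤ 1 then Real.log ((1 + √(1 - 4 * lam1 * lam3)) / 2)
            else Real.log (lam1 * lam3) / 2) + 2 * π * ε : ℝ) : EReal) := by
  obtain ⟨μ₁, μ₂, hadd, hmul, hμ₁, hμ, hlog⟩ := exists_roots_norm (lam1 * lam3)
  have he0 := Complex.exp_ne_zero (π * β * I)
  have : CompleteSpace (Matrix (Fin 2) (Fin 2) ℂ) := FiniteDimensional.complete ℂ _
  obtain ⟨r₀, hr₀, h⟩ := exists_iInf_logIntegral_skewIter_eq (q := cexp (2 * π * β * I))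
    (by simpa using Complex.norm_exp_ofReal_mul_I (2 * π * β))
    (exp_two_pi_mul_I_pow_ne_one hβ) (μ₁ := μ₁) (μ₂ := μ₂)
    (b₀ := !![-1, -(lam1 * cexp (π * β * I)); lam3 * (cexp (π * β * I))⁻¹, 0])
    (by
      rw [hadd, hmul]
      ext i j
      fin_cases i <;> fin_cases j <;> simp [Matrix.mul_apply] <;> field_simp
      ring)
    hμ₁ hμ
    (by
      intro heq
      have h01 := congrFun (congrFun heq 0) 1
      have h10 := congrFun (congrFun heq 1) 0
      simp at h01 h10
      exact hpos (by rw [h01, h10]))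
    !![(E : ℂ), -lam2; lam2, 0]
    !![-1, -(lam3 * (cexp (π * β * I))⁻¹); lam1 * cexp (π * β * I), 0]
  refine ⟨max 1 (-Real.log r₀ / (2 * π)), by positivity, fun ε hε => ?_⟩
  have hr : Real.exp (-(2 * π * ε)) ≤ r₀ := by
    have hlt := (le_max_right _ _).trans_lt hε
    rw [div_lt_iff₀ (by positivity)] at hlt
    rw [← Real.le_log_iff_exp_le hr₀]
    linarith
  have hL := h _ (Real.exp_pos _) hr
  rw [hlog, Real.log_exp, sub_neg_eq_add, ← mul_assoc] at hL
  rw [← hL, lyapunov]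
  simp only [norm_cocycleIter_eq_norm_skewIter (β := β) (Real.exp_pos (-(2 * π * ε)))
    (fun x => harperA_eq_smul_quadPoly lam1 lam2 lam3 β E x ε)]

theorem cocycleIter_map_conj (D : ℝ → Matrix (Fin 2) (Fin 2) ℂ) (β : ℝ) (n : ℕ) (x : ℝ) :
    cocycleIter (fun x => (D x).map (starRingEnd ℂ)) β n x =
      (cocycleIter D β n x).map (starRingEnd ℂ) := by
  induction n generalizing x with
  | zero => simp [cocycleIter]
  | succ n ih => rw [cocycleIter, cocycleIter, ih, Matrix.map_mul]

theorem lyapunov_map_conj (β : ℝ) (D : ℝ → Matrix (Fin 2) (Fin 2) ℂ) :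
    lyapunov β (fun x => (D x).map (starRingEnd ℂ)) = lyapunov β D := by
  simp only [lyapunov, cocycleIter_map_conj]
  congr! 4 with n
  ext x
  exact Matrix.frobenius_norm_map_eq _ _ fun a => RCLike.norm_conj a

theorem harperA_conj (lam1 lam2 lam3 β E : ℝ) (z : ℂ) :
    harperA lam1 lam2 lam3 β (E : ℂ) (starRingEnd ℂ z) =
      (harperA lam3 lam2 lam1 β (E : ℂ) z).map (starRingEnd ℂ) := by
  have htwo : starRingEnd ℂ 2 = 2 := map_ofNat _ 2
  ext i j
  fin_cases i <;> fin_cases j <;>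
    simp [harperA, harperC, harperCt, ← Complex.exp_conj, ← Complex.cos_conj, htwo] <;> ring_nf

end MatrixCocycle

/-- For irrational `β` and nonnegative couplings with `(λ₁, λ₃) ≠ (0,0)`,
letting `L_M = log((1+√(1-4λ₁λ₃))/2)` if `4λ₁λ₃ ≤ 1` and `L_M = (1/2)log(λ₁λ₃)` otherwise,
for every real `E` there is `ε₀ > 0` with
`L(β, A^E_ε) = L_M + 2π|ε|` for all `|ε| > ε₀`. -/
theorem extendedHarper_lyapunov_asymptotics
    (β lam1 lam2 lam3 : ℝ) (hβ : Irrational β)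
    (h1 : 0 ≤ lam1) (h2 : 0 ≤ lam2) (h3 : 0 ≤ lam3)
    (hpos : (lam1, lam3) ≠ (0, 0)) :
    ∀ E : ℝ, ∃ ε₀ > (0:ℝ), ∀ ε : ℝ, ε₀ < |ε| →
      lyapunov β (fun x : ℝ => harperA lam1 lam2 lam3 β (E : ℂ) ((x : ℂ) + (ε : ℂ) * Complex.I)) =
        (((if 4 * lam1 * lam3 ≤ 1 then Real.log ((1 + Real.sqrt (1 - 4 * lam1 * lam3)) / 2)
            else Real.log (lam1 * lam3) / 2) + 2 * π * |ε| : ℝ) : EReal) := by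
  intro E
  obtain ⟨ε₁, hε₁, hplus⟩ := exists_lyapunov_harperA_eq β lam1 lam2 lam3 E hβ hpos
  obtain ⟨ε₂, -, hminus⟩ := exists_lyapunov_harperA_eq β lam3 lam2 lam1 E hβ
    fun h => hpos (by simp_all)
  refine ⟨max ε₁ ε₂, lt_max_of_lt_left hε₁, fun ε hε => ?_⟩
  rcases le_total 0 ε with h | h
  · rw [abs_of_nonneg h] at hε ⊢
    exact hplus ε ((le_max_left _ _).trans_lt hε)
  · rw [abs_of_nonpos h] at hε ⊢
    have hconj (x : ℝ) : harperA lam1 lam2 lam3 β (E : ℂ) ((x : ℂ) + (ε : ℂ) * Complex.I) =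
        (harperA lam3 lam2 lam1 β (E : ℂ) ((x : ℂ) + ((-ε : ℝ) : ℂ) * Complex.I)).map
          (starRingEnd ℂ) := by
      rw [← harperA_conj]
      simp
    simp only [hconj]
    rw [lyapunov_map_conj, hminus _ ((le_max_right _ _).trans_lt hε), mul_right_comm,
      mul_comm lam3]
end
end

section
/- Let β be an irrational real number, μ a nonzero real number, and E ∈ ℝ. Consider the almost Mathieu transfer matrix B^E(z) = [[E − 2μ·cos(2πz), −1], [1, 0]]. Then there exists ε′ > 0 such that for every real ε with |ε| > ε′, the complexified Lyapunov exponent satisfies L(β, B^E_ε) = log|μ| + 2π|ε|. -/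
open MeasureTheory Filter Complex
open scoped ENNReal Real NNReal

noncomputable section

attribute [local instance] Matrix.frobeniusNormedAddCommGroup

/-- The almost Mathieu transfer matrix multiplied by `w = exp (2πiz)`; its entries are polynomials
in `w`. -/
def rescaledMathieu (μ E : ℝ) (w : ℂ) : Matrix (Fin 2) (Fin 2) ℂ :=
  !![(E : ℂ) * w - μ * (1 + w ^ 2), -w; w, 0]

/-- The iterates of `rescaledMathieu` over the rotation `w ↦ ζ * w`. -/
def rescaledIter (μ E : ℝ) (ζ : ℂ) : ℕ → ℂ → Matrix (Fin 2) (Fin 2) ℂ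
  | 0, _ => 1
  | n + 1, w => rescaledIter μ E ζ n (ζ * w) * rescaledMathieu μ E w

lemma rescaledIter_succ_left (μ E : ℝ) (ζ : ℂ) (n : ℕ) (w : ℂ) :
    rescaledIter μ E ζ (n + 1) w =
      rescaledMathieu μ E (ζ ^ n * w) * rescaledIter μ E ζ n w := by
  induction n generalizing w with
  | zero => simp [rescaledIter]
  | succ n ih =>
    rw [rescaledIter, ih, rescaledIter, Matrix.mul_assoc, pow_succ, mul_assoc]

lemma differentiable_rescaledIter (μ E : ℝ) (ζ : ℂ) (n : ℕ) (i j : Fin 2) :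
    Differentiable ℂ fun w => rescaledIter μ E ζ n w i j := by
  induction n generalizing i j with
  | zero => simp [rescaledIter]
  | succ n ih =>
    have h (k : Fin 2) : Differentiable ℂ fun w => rescaledIter μ E ζ n (ζ * w) i k :=
      (ih i k).comp (differentiable_id.const_mul ζ)
    have h' (k : Fin 2) : Differentiable ℂ fun w => rescaledMathieu μ E w k j := by
      fin_cases k <;> fin_cases j <;> simp [rescaledMathieu] <;> fun_prop
    simp only [rescaledIter, Matrix.mul_apply, Fin.sum_univ_two]
    exact ((h 0).mul (h' 0)).add ((h 1).mul (h' 1))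

lemma rescaledIter_zero_apply (μ E : ℝ) (ζ : ℂ) (n : ℕ) :
    rescaledIter μ E ζ n 0 0 0 = (-(μ : ℂ)) ^ n := by
  induction n with
  | zero => simp [rescaledIter]
  | succ n ih =>
    simp [rescaledIter, Matrix.mul_apply, rescaledMathieu, ih, pow_succ]

/-- In a disc where the upper left entry of `rescaledMathieu` dominates, the upper left entry of
every iterate dominates the other entries and does not vanish. -/
lemma rescaledIter_dominated {μ E r : ℝ} {ζ : ℂ} (hζ : ‖ζ‖ = 1)
    (hP : ∀ w : ℂ, ‖w‖ ≤ r → 2 * ‖w‖ < ‖(E : ℂ) * w - μ * (1 + w ^ 2)‖)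
    (n : ℕ) (w : ℂ) (hw : ‖w‖ ≤ r) :
    rescaledIter μ E ζ n w 0 0 ≠ 0 ∧
      ∀ i j, ‖rescaledIter μ E ζ n w i j‖ ≤ ‖rescaledIter μ E ζ n w 0 0‖ := by
  induction n generalizing w with
  | zero =>
    refine ⟨by simp [rescaledIter], fun i j => ?_⟩
    fin_cases i <;> fin_cases j <;> simp [rescaledIter]
  | succ n ih =>
    have hw_right : ‖ζ * w‖ ≤ r := by simpa [hζ] using hw
    have hnorm : ‖ζ ^ n * w‖ = ‖w‖ := by simp [hζ]
    have hw_left : ‖ζ ^ n * w‖ ≤ r := hnorm.trans_le hw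
    obtain ⟨hA, hrow⟩ := ih _ hw_right
    obtain ⟨-, hcol⟩ := ih _ hw
    have hPr := hP w hw
    have hPl := hP _ hw_left
    rw [hnorm] at hPl
    have hApos := norm_pos_iff.2 hA
    have e00 : rescaledIter μ E ζ (n + 1) w 0 0 =
        rescaledIter μ E ζ n (ζ * w) 0 0 * ((E : ℂ) * w - μ * (1 + w ^ 2))
          - -(rescaledIter μ E ζ n (ζ * w) 0 1 * w) := by
      simp [rescaledIter, Matrix.mul_apply, rescaledMathieu]
    have e01 : rescaledIter μ E ζ (n + 1) w 0 1 = -(rescaledIter μ E ζ n (ζ * w) 0 0 * w) := by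
      simp [rescaledIter, Matrix.mul_apply, rescaledMathieu]
    have e00l : rescaledIter μ E ζ (n + 1) w 0 0 =
        ((E : ℂ) * (ζ ^ n * w) - μ * (1 + (ζ ^ n * w) ^ 2)) * rescaledIter μ E ζ n w 0 0
          - (ζ ^ n * w) * rescaledIter μ E ζ n w 1 0 := by
      rw [rescaledIter_succ_left]
      simp [Matrix.mul_apply, rescaledMathieu, sub_eq_add_neg]
    have e1 (j : Fin 2) : rescaledIter μ E ζ (n + 1) w 1 j =
        (ζ ^ n * w) * rescaledIter μ E ζ n w 0 j := by
      rw [rescaledIter_succ_left]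
      simp [Matrix.mul_apply, rescaledMathieu]
    have hlow : ‖w‖ * ‖rescaledIter μ E ζ n (ζ * w) 0 0‖ < ‖rescaledIter μ E ζ (n + 1) w 0 0‖ := by
      rw [e00]
      refine lt_of_lt_of_le ?_ (norm_sub_norm_le _ _)
      rw [norm_neg, norm_mul, norm_mul]
      nlinarith [mul_le_mul_of_nonneg_right (hrow 0 1) (norm_nonneg w),
        mul_lt_mul_of_pos_left hPr hApos]
    have hlow_left : ‖w‖ * ‖rescaledIter μ E ζ n w 0 0‖ ≤ ‖rescaledIter μ E ζ (n + 1) w 0 0‖ := by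
      rw [e00l]
      refine le_trans ?_ (norm_sub_norm_le _ _)
      rw [norm_mul, norm_mul, hnorm]
      nlinarith [mul_le_mul_of_nonneg_left (hcol 1 0) (norm_nonneg w),
        mul_le_mul_of_nonneg_right hPl.le (norm_nonneg (rescaledIter μ E ζ n w 0 0))]
    have hbot (j : Fin 2) : ‖rescaledIter μ E ζ (n + 1) w 1 j‖ ≤
        ‖rescaledIter μ E ζ (n + 1) w 0 0‖ := by
      rw [e1, norm_mul, hnorm]
      exact (mul_le_mul_of_nonneg_left (hcol 0 j) (norm_nonneg w)).trans hlow_left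
    refine ⟨norm_pos_iff.1 (lt_of_le_of_lt (by positivity) hlow), fun i j => ?_⟩
    fin_cases i
    · fin_cases j
      · exact le_rfl
      · simp only [Fin.zero_eta, Fin.mk_one]
        rw [e01, norm_neg, norm_mul, mul_comm]
        exact hlow.le
    · exact hbot j

lemma frobenius_norm_fin_two (A : Matrix (Fin 2) (Fin 2) ℂ) :
    ‖A‖ = √(‖A 0 0‖ ^ 2 + ‖A 0 1‖ ^ 2 + (‖A 1 0‖ ^ 2 + ‖A 1 1‖ ^ 2)) := by
  rw [Matrix.frobenius_norm_def, Real.sqrt_eq_rpow]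
  simp [Fin.sum_univ_two]

lemma norm_apply_zero_le_frobenius (A : Matrix (Fin 2) (Fin 2) ℂ) : ‖A 0 0‖ ≤ ‖A‖ := by
  rw [frobenius_norm_fin_two]
  apply Real.le_sqrt_of_sq_le
  linarith [sq_nonneg ‖A 0 1‖, sq_nonneg ‖A 1 0‖, sq_nonneg ‖A 1 1‖]

lemma frobenius_le_two_mul {A : Matrix (Fin 2) (Fin 2) ℂ} (h : ∀ i j, ‖A i j‖ ≤ ‖A 0 0‖) :
    ‖A‖ ≤ 2 * ‖A 0 0‖ := by
  rw [frobenius_norm_fin_two]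
  refine Real.sqrt_le_iff.2 ⟨by positivity, ?_⟩
  have hsq (i j) : ‖A i j‖ ^ 2 ≤ ‖A 0 0‖ ^ 2 := pow_le_pow_left₀ (norm_nonneg _) (h i j) 2
  linarith [hsq 0 1, hsq 1 0, hsq 1 1]

lemma frobenius_norm_smul_fin_two (c : ℂ) (A : Matrix (Fin 2) (Fin 2) ℂ) :
    ‖c • A‖ = ‖c‖ * ‖A‖ := by
  rw [frobenius_norm_fin_two, frobenius_norm_fin_two]
  simp only [Matrix.smul_apply, smul_eq_mul, norm_mul, mul_pow, ← mul_add]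
  rw [Real.sqrt_mul (by positivity), Real.sqrt_sq (norm_nonneg c)]

/-- For a positive continuous function, `logIntegral` is the ordinary integral of the logarithm. -/
lemma logIntegral_eq_coe_integral {g : ℝ → ℝ} (hg : Continuous g) (hpos : ∀ x, 0 < g x) :
    logIntegral g = ((∫ x in (0 : ℝ)..1, Real.log (g x) : ℝ) : EReal) := by
  have hcont : Continuous fun x => Real.log (g x) := hg.log fun x => (hpos x).ne'
  have hneg : ∫⁻ x in Set.Ioc (0 : ℝ) 1, ENNReal.ofReal (-Real.log (g x)) ≠ ⊤ :=
    (hcont.neg.intervalIntegrable 0 1).1.lintegral_lt_top.ne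
  have hint : IntegrableOn (fun x => Real.log (g x)) (Set.Ioc 0 1) volume :=
    (hcont.intervalIntegrable 0 1).1
  rw [intervalIntegral.integral_of_le zero_le_one,
    integral_eq_lintegral_pos_part_sub_lintegral_neg_part hint, EReal.coe_sub,
    EReal.coe_ennreal_toReal hint.lintegral_lt_top.ne,
    EReal.coe_ennreal_toReal hneg]
  simp [logIntegral, (hpos _).ne']

/-- Averaging over a full turn, in either direction, gives the circle average. -/
lemma integral_circleMap_turn (f : ℂ → ℝ) (r : ℝ) {s : ℝ} (hs : s = 1 ∨ s = -1) :
    ∫ x in (0 : ℝ)..1, f (circleMap 0 r (2 * π * s * x)) = Real.circleAverage f 0 r := by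
  have hs0 : 2 * π * s ≠ 0 := by
    rcases hs with rfl | rfl <;> simp [Real.pi_ne_zero]
  rw [intervalIntegral.integral_comp_mul_left (fun θ => f (circleMap 0 r θ)) hs0,
    Real.circleAverage_def]
  rcases hs with rfl | rfl
  · simp
  · have hper : Function.Periodic (fun θ => f (circleMap 0 r θ)) (2 * π) := fun θ => by
      simp only [periodic_circleMap 0 r θ]
    have h := hper.intervalIntegral_add_eq (-(2 * π)) 0
    simp only [neg_add_cancel, zero_add] at h
    rw [mul_zero, mul_neg_one, mul_one, intervalIntegral.integral_symm, h, inv_neg, smul_neg,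
      neg_smul, neg_neg]

/-- The almost Mathieu transfer matrix along the line `Im z = ε`. -/
def almostMathieu (μ E ε x : ℝ) : Matrix (Fin 2) (Fin 2) ℂ :=
  !![(E : ℂ) - 2 * (μ : ℂ) * Complex.cos (2 * (π : ℂ) * ((x : ℂ) + (ε : ℂ) * Complex.I)), -1;
     1, 0]

lemma rescaledMathieu_circleMap (μ E ε x : ℝ) {s : ℝ} (hs : s = 1 ∨ s = -1) :
    rescaledMathieu μ E (circleMap 0 (Real.exp (-(2 * π * (s * ε)))) (2 * π * s * x)) =
      circleMap 0 (Real.exp (-(2 * π * (s * ε)))) (2 * π * s * x) • almostMathieu μ E ε x := by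
  have hw : circleMap 0 (Real.exp (-(2 * π * (s * ε)))) (2 * π * s * x) =
      cexp (s * (2 * (π : ℂ) * ((x : ℂ) + (ε : ℂ) * Complex.I) * I)) := by
    rw [circleMap_zero, ofReal_exp, ← Complex.exp_add]
    congr 1
    push_cast
    linear_combination (-2 * π * s * ε) * I_sq
  have hcos : circleMap 0 (Real.exp (-(2 * π * (s * ε)))) (2 * π * s * x) *
      (2 * Complex.cos (2 * (π : ℂ) * ((x : ℂ) + (ε : ℂ) * Complex.I))) =
      1 + circleMap 0 (Real.exp (-(2 * π * (s * ε)))) (2 * π * s * x) ^ 2 := by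
    rw [hw, Complex.two_cos]
    rcases hs with rfl | rfl <;>
      simp only [mul_add, ← Complex.exp_add, sq, ofReal_one, ofReal_neg] <;> ring_nf <;>
      simp [add_comm]
  simp only [rescaledMathieu, almostMathieu, ← hcos]
  ext i j
  fin_cases i <;> fin_cases j <;> simp
  ring

lemma norm_rescaledIter_circleMap (β μ E ε x : ℝ) {s : ℝ} (hs : s = 1 ∨ s = -1) (n : ℕ) :
    ‖rescaledIter μ E (circleMap 0 1 (2 * π * s * β)) n
        (circleMap 0 (Real.exp (-(2 * π * (s * ε)))) (2 * π * s * x))‖ =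
      Real.exp (-(2 * π * (s * ε))) ^ n * ‖cocycleIter (almostMathieu μ E ε) β n x‖ := by
  obtain ⟨c, hc, h⟩ : ∃ c : ℂ, ‖c‖ = Real.exp (-(2 * π * (s * ε))) ^ n ∧
      rescaledIter μ E (circleMap 0 1 (2 * π * s * β)) n
        (circleMap 0 (Real.exp (-(2 * π * (s * ε)))) (2 * π * s * x)) =
      c • cocycleIter (almostMathieu μ E ε) β n x := by
    induction n generalizing x with
    | zero => exact ⟨1, by simp, by simp [rescaledIter, cocycleIter]⟩
    | succ n ih =>
      obtain ⟨c, hc, h⟩ := ih (x + β)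
      refine ⟨c * circleMap 0 (Real.exp (-(2 * π * (s * ε)))) (2 * π * s * x), ?_, ?_⟩
      · rw [norm_mul, hc, norm_circleMap_zero, abs_of_pos (Real.exp_pos _), pow_succ]
      · have hrot : circleMap 0 1 (2 * π * s * β) *
            circleMap 0 (Real.exp (-(2 * π * (s * ε)))) (2 * π * s * x) =
            circleMap 0 (Real.exp (-(2 * π * (s * ε)))) (2 * π * s * (x + β)) := by
          rw [circleMap_zero_mul, one_mul, mul_add, add_comm]
        rw [rescaledIter, hrot, h, rescaledMathieu_circleMap μ E ε x hs, cocycleIter,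
          Matrix.smul_mul, Matrix.mul_smul, smul_smul]
  rw [h, frobenius_norm_smul_fin_two, hc]

lemma logIntegral_almostMathieu_bounds {β μ E ε s : ℝ} (hs : s = 1 ∨ s = -1)
    (hP : ∀ w : ℂ, ‖w‖ ≤ Real.exp (-(2 * π * (s * ε))) →
      2 * ‖w‖ < ‖(E : ℂ) * w - μ * (1 + w ^ 2)‖) (n : ℕ) :
    ∃ J : ℝ, (logIntegral fun x => ‖cocycleIter (almostMathieu μ E ε) β n x‖) = (J : EReal) ∧
      n * (Real.log |μ| + 2 * π * (s * ε)) ≤ J ∧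
      J ≤ n * (Real.log |μ| + 2 * π * (s * ε)) + Real.log 2 := by
  set r := Real.exp (-(2 * π * (s * ε))) with hr
  set ζ := circleMap 0 1 (2 * π * s * β)
  have hζ : ‖ζ‖ = 1 := by simp [ζ]
  have hrpos : 0 < r := Real.exp_pos _
  have hdom := rescaledIter_dominated hζ hP n
  set a : ℂ → ℂ := fun w => rescaledIter μ E ζ n w 0 0 with ha
  set w : ℝ → ℂ := fun x => circleMap 0 r (2 * π * s * x) with hw
  have hwr (x : ℝ) : ‖w x‖ ≤ r := by simp [hw, abs_of_pos hrpos]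
  have hwc : Continuous w := (continuous_circleMap 0 r).comp (by fun_prop)
  have hN (x : ℝ) : ‖cocycleIter (almostMathieu μ E ε) β n x‖ =
      (r ^ n)⁻¹ * ‖rescaledIter μ E ζ n (w x)‖ := by
    rw [norm_rescaledIter_circleMap β μ E ε x hs n, inv_mul_cancel_left₀ (by positivity)]
  have hapos (x : ℝ) : 0 < ‖a (w x)‖ := norm_pos_iff.2 (hdom _ (hwr x)).1
  have hNpos (x : ℝ) : 0 < ‖rescaledIter μ E ζ n (w x)‖ :=
    (hapos x).trans_le (norm_apply_zero_le_frobenius _)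
  have hentry (i j : Fin 2) : Continuous fun x => rescaledIter μ E ζ n (w x) i j :=
    (differentiable_rescaledIter μ E ζ n i j).continuous.comp hwc
  have hNc : Continuous fun x => ‖rescaledIter μ E ζ n (w x)‖ := by
    simp only [frobenius_norm_fin_two]
    exact ((((hentry 0 0).norm.pow 2).add ((hentry 0 1).norm.pow 2)).add
      (((hentry 1 0).norm.pow 2).add ((hentry 1 1).norm.pow 2))).sqrt
  have hlogN : Continuous fun x => Real.log ‖rescaledIter μ E ζ n (w x)‖ :=
    hNc.log fun x => (hNpos x).ne'
  have hloga : Continuous fun x => Real.log ‖a (w x)‖ :=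
    (hentry 0 0).norm.log fun x => (hapos x).ne'
  have hmean : ∫ x in (0 : ℝ)..1, Real.log ‖a (w x)‖ = n * Real.log |μ| := by
    have hJ := AnalyticOnNhd.circleAverage_log_norm_of_ne_zero (R := r) (c := 0) (g := a)
      (fun z _ => (differentiable_rescaledIter μ E ζ n 0 0).analyticAt z)
      (fun z hz => (hdom z (by simpa [abs_of_pos hrpos] using hz)).1)
    rw [← integral_circleMap_turn _ r hs] at hJ
    rw [hJ, ha]
    simp only [rescaledIter_zero_apply, norm_pow, norm_neg, norm_real, Real.norm_eq_abs,
      Real.log_pow]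
  have hlogr : Real.log (r ^ n)⁻¹ = n * (2 * π * (s * ε)) := by
    rw [Real.log_inv, Real.log_pow, hr, Real.log_exp]
    ring
  refine ⟨n * (2 * π * (s * ε)) + ∫ x in (0 : ℝ)..1, Real.log ‖rescaledIter μ E ζ n (w x)‖,
    ?_, ?_, ?_⟩
  · simp only [hN]
    rw [logIntegral_eq_coe_integral (hNc.const_mul _) fun x => mul_pos (by positivity) (hNpos x)]
    simp only [Real.log_mul (inv_ne_zero (pow_ne_zero n hrpos.ne')) (hNpos _).ne', hlogr]
    rw [intervalIntegral.integral_add (continuous_const.intervalIntegrable 0 1)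
      (hlogN.intervalIntegrable 0 1)]
    simp
  · have h := intervalIntegral.integral_mono (μ := volume) zero_le_one
      (hloga.intervalIntegrable 0 1)
      (hlogN.intervalIntegrable 0 1) fun x =>
        Real.log_le_log (hapos x) (norm_apply_zero_le_frobenius _)
    rw [hmean] at h
    linarith
  · have h := intervalIntegral.integral_mono (μ := volume) zero_le_one
      (hlogN.intervalIntegrable 0 1)
      ((by fun_prop : Continuous fun x => Real.log 2 + Real.log ‖a (w x)‖).intervalIntegrable 0 1)
      fun x => by
        beta_reduce
        rw [← Real.log_mul two_ne_zero (hapos x).ne']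
        exact Real.log_le_log (hNpos x) (frobenius_le_two_mul (hdom _ (hwr x)).2)
    rw [intervalIntegral.integral_add (continuous_const.intervalIntegrable 0 1)
      (hloga.intervalIntegrable 0 1),
      hmean] at h
    simp only [intervalIntegral.integral_const, sub_zero, one_smul] at h
    linarith

/-- If the log-norm integral of the `n`-th iterate stays within `C` of `n * L`, the Lyapunov
exponent is `L`. -/
lemma lyapunov_eq_of_bounds {β L C : ℝ} {D : ℝ → Matrix (Fin 2) (Fin 2) ℂ}
    (h : ∀ n : ℕ, ∃ J : ℝ, (logIntegral fun x => ‖cocycleIter D β n x‖) = (J : EReal) ∧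
      n * L ≤ J ∧ J ≤ n * L + C) :
    lyapunov β D = (L : EReal) := by
  apply le_antisymm
  · have hlim : Tendsto (fun n : ℕ => L + C * (1 / ((n : ℝ) + 1))) atTop (nhds L) := by
      simpa using (tendsto_one_div_add_atTop_nhds_zero_nat.const_mul C).const_add L
    refine ge_of_tendsto' ((continuous_coe_real_ereal.tendsto L).comp hlim) fun n => ?_
    refine (iInf_le _ n).trans ?_
    obtain ⟨J, hJ, -, hle⟩ := h (n + 1)
    rw [hJ, ← EReal.coe_mul, Function.comp_apply, EReal.coe_le_coe_iff]
    have hn : (0 : ℝ) < n + 1 := by positivity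
    push_cast at hle
    rw [inv_mul_le_iff₀ hn]
    field_simp
    linarith
  · refine le_iInf fun n => ?_
    obtain ⟨J, hJ, hge, -⟩ := h (n + 1)
    rw [hJ, ← EReal.coe_mul, EReal.coe_le_coe_iff]
    have hn : (0 : ℝ) < n + 1 := by positivity
    push_cast at hge
    rwa [le_inv_mul_iff₀ hn]

lemma two_mul_norm_lt_of_norm_le {μ : ℝ} (hμ : μ ≠ 0) (E : ℝ) {w : ℂ}
    (hw : ‖w‖ ≤ |μ| / (|μ| + |E| + 3)) :
    2 * ‖w‖ < ‖(E : ℂ) * w - μ * (1 + w ^ 2)‖ := by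
  have hμ' := abs_pos.2 hμ
  have hE := abs_nonneg E
  have hw0 := norm_nonneg w
  have hden : 0 < |μ| + |E| + 3 := by positivity
  have hw1 : ‖w‖ ≤ 1 := hw.trans ((div_le_one hden).2 (by linarith))
  have hwμ : ‖w‖ * (|μ| + |E| + 3) ≤ |μ| := (le_div_iff₀ hden).1 hw
  have htri : |μ| ≤ ‖(E : ℂ) * w - μ * (1 + w ^ 2)‖ + (|E| * ‖w‖ + |μ| * ‖w‖ ^ 2) := by
    calc |μ| = ‖-((E : ℂ) * w - μ * (1 + w ^ 2)) + (E * w - μ * w ^ 2)‖ := by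
          rw [← Real.norm_eq_abs, ← norm_real]
          congr 1
          ring
      _ ≤ _ := by
          refine (norm_add_le _ _).trans ?_
          rw [norm_neg]
          gcongr
          refine (norm_sub_le _ _).trans ?_
          simp
  have hsq : |μ| * ‖w‖ ^ 2 ≤ |μ| * ‖w‖ := by nlinarith [mul_nonneg hμ'.le hw0]
  rcases hw0.eq_or_lt with h0 | h0
  · rw [← h0] at htri ⊢
    simp only [mul_zero, ne_eq, OfNat.ofNat_ne_zero, not_false_eq_true, zero_pow, add_zero] at htri ⊢
    linarith
  · linarith

/-- For irrational `β`, nonzero real coupling `μ` and real energy `E`,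
the complexified Lyapunov exponent of the almost Mathieu cocycle
`B^E(z) = [[E - 2μ cos(2πz), -1], [1, 0]]` satisfies
`L(β, B^E_ε) = log|μ| + 2π|ε|` for all `|ε| > ε'`, some `ε' > 0`. -/
theorem almostMathieu_lyapunov_asymptotics
    (β μ E : ℝ) (hβ : Irrational β) (hμ : μ ≠ 0) :
    ∃ ε' > (0:ℝ), ∀ ε : ℝ, ε' < |ε| →
      lyapunov β (fun x : ℝ =>
          !![(E : ℂ) - 2 * (μ : ℂ) * Complex.cos (2 * (π : ℂ) * ((x : ℂ) + (ε : ℂ) * Complex.I)), -1;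
             1, 0]) =
        ((Real.log |μ| + 2 * π * |ε| : ℝ) : EReal) := by
  have hμ' := abs_pos.2 hμ
  have hden : 0 < |μ| + |E| + 3 := by positivity
  refine ⟨(|μ| + |E| + 3) / |μ|, by positivity, fun ε hε => ?_⟩
  obtain ⟨s, hs, hsε⟩ : ∃ s : ℝ, (s = 1 ∨ s = -1) ∧ s * ε = |ε| := by
    rcases abs_cases ε with ⟨h, -⟩ | ⟨h, -⟩
    · exact ⟨1, Or.inl rfl, by rw [h, one_mul]⟩
    · exact ⟨-1, Or.inr rfl, by rw [h, neg_one_mul]⟩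
  have hradius : Real.exp (-(2 * π * (s * ε))) ≤ |μ| / (|μ| + |E| + 3) := by
    rw [hsε, Real.exp_neg, ← inv_div]
    refine inv_anti₀ (by positivity) (hε.le.trans ?_)
    have h1 := Real.add_one_le_exp (2 * π * |ε|)
    nlinarith [Real.pi_gt_three, abs_nonneg ε]
  rw [← hsε]
  exact lyapunov_eq_of_bounds (logIntegral_almostMathieu_bounds hs fun w hw =>
    two_mul_norm_lt_of_norm_le hμ E (hw.trans hradius))
end
end

section
/- The Lyapunov exponent is jointly continuous at every constant cocycle, for arbitrary (not necessarily irrational) frequency: let A ∈ M₂(ℂ), β₀ ∈ ℝ, and suppose β_n → β₀ in ℝ and D_n → A uniformly on ℝ, where each D_n : ℝ → M₂(ℂ) is continuous and 1-periodic and A is regarded as the constant function. Then L(β_n, D_n) → log ρ(A) in ℝ ∪ {−∞}, where ρ(A) is the spectral radius of A (with log 0 := −∞). -/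
open MeasureTheory Filter Complex
open scoped ENNReal Real NNReal

noncomputable section

attribute [local instance] Matrix.frobeniusNormedAddCommGroup

/-- The map `g ↦ ∫₀¹ log g` is bounded below by the logarithm of any positive lower bound of `g`. -/
lemma log_le_logIntegral {g : ℝ → ℝ} {c : ℝ} (hc : 0 < c) (hg : ∀ x, c ≤ g x) :
    ((Real.log c : ℝ) : EReal) ≤ logIntegral g := by
  have hpos : ENNReal.ofReal (Real.log c) ≤
      ∫⁻ x in Set.Ioc (0 : ℝ) 1, ENNReal.ofReal (Real.log (g x)) := by
    calc ENNReal.ofReal (Real.log c)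
        = ∫⁻ _ in Set.Ioc (0 : ℝ) 1, ENNReal.ofReal (Real.log c) := by simp
      _ ≤ _ := lintegral_mono fun x =>
        ENNReal.ofReal_le_ofReal (Real.log_le_log hc (hg x))
  have hneg : (∫⁻ x in Set.Ioc (0 : ℝ) 1,
      if g x = 0 then (⊤ : ℝ≥0∞) else ENNReal.ofReal (-Real.log (g x))) ≤
      ENNReal.ofReal (-Real.log c) := by
    calc _ ≤ ∫⁻ _ in Set.Ioc (0 : ℝ) 1, ENNReal.ofReal (-Real.log c) :=
          lintegral_mono fun x => by
            rw [if_neg (hc.trans_le (hg x)).ne']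
            exact ENNReal.ofReal_le_ofReal (neg_le_neg (Real.log_le_log hc (hg x)))
      _ = _ := by simp
  have hlog : ((Real.log c : ℝ) : EReal) =
      ((ENNReal.ofReal (Real.log c) : ℝ≥0∞) : EReal) -
        ((ENNReal.ofReal (-Real.log c) : ℝ≥0∞) : EReal) := by
    rw [EReal.coe_ennreal_ofReal, EReal.coe_ennreal_ofReal, ← EReal.coe_sub,
      max_zero_sub_max_neg_zero_eq_self]
  rw [hlog]
  exact EReal.sub_le_sub (EReal.coe_ennreal_le_coe_ennreal_iff.2 hpos)
    (EReal.coe_ennreal_le_coe_ennreal_iff.2 hneg)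

/-- The map `g ↦ ∫₀¹ log g` is bounded above by the logarithm of any upper bound of `g ≥ 0`. -/
lemma logIntegral_le_log {g : ℝ → ℝ} {C : ℝ} (hg₀ : ∀ x, 0 ≤ g x)
    (hg : ∀ x, g x ≤ C) : logIntegral g ≤ ((Real.log C : ℝ) : EReal) := by
  have hpos : ∫⁻ x in Set.Ioc (0 : ℝ) 1, ENNReal.ofReal (Real.log (g x)) ≤
      ENNReal.ofReal (Real.log C) := by
    calc _ ≤ ∫⁻ _ in Set.Ioc (0 : ℝ) 1, ENNReal.ofReal (Real.log C) :=
          lintegral_mono fun x => by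
            rcases (hg₀ x).eq_or_lt with h | h
            · simp [← h]
            · exact ENNReal.ofReal_le_ofReal (Real.log_le_log h (hg x))
      _ = _ := by simp
  have hneg : ENNReal.ofReal (-Real.log C) ≤ ∫⁻ x in Set.Ioc (0 : ℝ) 1,
      if g x = 0 then (⊤ : ℝ≥0∞) else ENNReal.ofReal (-Real.log (g x)) := by
    calc ENNReal.ofReal (-Real.log C)
        = ∫⁻ _ in Set.Ioc (0 : ℝ) 1, ENNReal.ofReal (-Real.log C) := by simp
      _ ≤ _ := lintegral_mono fun x => by
        split_ifs with h
        · exact le_top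
        · exact ENNReal.ofReal_le_ofReal
            (neg_le_neg (Real.log_le_log ((hg₀ x).lt_of_ne' h) (hg x)))
  have hlog : ((Real.log C : ℝ) : EReal) =
      ((ENNReal.ofReal (Real.log C) : ℝ≥0∞) : EReal) -
        ((ENNReal.ofReal (-Real.log C) : ℝ≥0∞) : EReal) := by
    rw [EReal.coe_ennreal_ofReal, EReal.coe_ennreal_ofReal, ← EReal.coe_sub,
      max_zero_sub_max_neg_zero_eq_self]
  rw [hlog]
  exact EReal.sub_le_sub (EReal.coe_ennreal_le_coe_ennreal_iff.2 hpos)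
    (EReal.coe_ennreal_le_coe_ennreal_iff.2 hneg)

lemma coe_inv_mul_log_exp_pow (c : ℝ) (k : ℕ) :
    ((((k : ℝ) + 1)⁻¹ : ℝ) : EReal) * ((Real.log (Real.exp c ^ (k + 1)) : ℝ) : EReal) = c := by
  rw [← EReal.coe_mul, Real.log_pow, Real.log_exp]
  congr 1
  push_cast
  field_simp

lemma le_lyapunov_of_exp_pow_le {β c : ℝ} {D : ℝ → Matrix (Fin 2) (Fin 2) ℂ}
    (h : ∀ k x, Real.exp c ^ k ≤ ‖cocycleIter D β k x‖) : (c : EReal) ≤ lyapunov β D :=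
  le_iInf fun k => by
    rw [← coe_inv_mul_log_exp_pow c k]
    exact mul_le_mul_of_nonneg_left
      (log_le_logIntegral (pow_pos (Real.exp_pos c) _) (h (k + 1)))
      (EReal.coe_nonneg.2 (by positivity))

lemma lyapunov_le_of_le_exp_pow {β c : ℝ} {D : ℝ → Matrix (Fin 2) (Fin 2) ℂ} (k : ℕ)
    (h : ∀ x, ‖cocycleIter D β (k + 1) x‖ ≤ Real.exp c ^ (k + 1)) :
    lyapunov β D ≤ (c : EReal) :=
  (iInf_le _ k).trans <| by
    rw [← coe_inv_mul_log_exp_pow c k]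
    exact mul_le_mul_of_nonneg_left
      (logIntegral_le_log (fun _ => norm_nonneg _) h)
      (EReal.coe_nonneg.2 (by positivity))

lemma exists_norm_pow_lt_of_spectralRadius_lt {A : Matrix (Fin 2) (Fin 2) ℂ} {R : ℝ}
    (hR : spectralRadius ℂ A < ENNReal.ofReal R) : ∃ k : ℕ, ‖A ^ (k + 1)‖ < R ^ (k + 1) := by
  let _ : NormedRing (Matrix (Fin 2) (Fin 2) ℂ) := Matrix.frobeniusNormedRing
  let _ : NormedAlgebra ℂ (Matrix (Fin 2) (Fin 2) ℂ) := Matrix.frobeniusNormedAlgebra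
  have : CompleteSpace (Matrix (Fin 2) (Fin 2) ℂ) := FiniteDimensional.complete ℂ _
  have hR₀ : 0 < R := ENNReal.ofReal_pos.1 (bot_le.trans_lt hR)
  have h := (spectrum.pow_norm_pow_one_div_tendsto_nhds_spectralRadius A).eventually_lt_const hR
  obtain ⟨k, hk, hk'⟩ := (h.and (eventually_ge_atTop 1)).exists
  obtain ⟨k, rfl⟩ := Nat.exists_eq_add_of_le' hk'
  refine ⟨k, ?_⟩
  have h' := (ENNReal.ofReal_lt_ofReal_iff hR₀).1 hk
  have h'' := pow_lt_pow_left₀ h' (by positivity) (Nat.succ_ne_zero k)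
  rwa [one_div, Real.rpow_inv_natCast_pow (norm_nonneg _) (Nat.succ_ne_zero k)] at h''

lemma spectralRadius_ne_top (A : Matrix (Fin 2) (Fin 2) ℂ) : spectralRadius ℂ A ≠ ⊤ := by
  let _ : NormedRing (Matrix (Fin 2) (Fin 2) ℂ) := Matrix.frobeniusNormedRing
  let _ : NormedAlgebra ℂ (Matrix (Fin 2) (Fin 2) ℂ) := Matrix.frobeniusNormedAlgebra
  have : CompleteSpace (Matrix (Fin 2) (Fin 2) ℂ) := FiniteDimensional.complete ℂ _
  obtain ⟨μ, -, hμ⟩ := spectrum.exists_nnnorm_eq_spectralRadius A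
  exact hμ ▸ ENNReal.coe_ne_top

lemma tendsto_cocycleIter {A : Matrix (Fin 2) (Fin 2) ℂ} {βseq : ℕ → ℝ}
    {Dseq : ℕ → ℝ → Matrix (Fin 2) (Fin 2) ℂ}
    (h : Tendsto (fun q : ℕ × ℝ => Dseq q.1 q.2) (atTop ×ˢ ⊤) (nhds A)) (k : ℕ) :
    Tendsto (fun q : ℕ × ℝ => cocycleIter (Dseq q.1) (βseq q.1) k q.2) (atTop ×ˢ ⊤)
      (nhds (A ^ k)) := by
  induction k with
  | zero => simp [cocycleIter]
  | succ k ih =>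
    have hshift : Tendsto (fun q : ℕ × ℝ => (q.1, q.2 + βseq q.1)) (atTop ×ˢ ⊤)
        (atTop ×ˢ ⊤) := tendsto_fst.prodMk tendsto_top
    rw [pow_succ]
    exact (ih.comp hshift).mul h

/-- The cone `‖v 1‖ ≤ δ ‖v 0‖` is mapped into itself by the cocycle, and first coordinates in it
are expanded by at least `r` at each step. -/
lemma pow_mul_norm_le_of_cone {E : ℝ → Matrix (Fin 2) (Fin 2) ℂ} {β δ r : ℝ}
    (hr : 0 ≤ r) (hδ : 0 ≤ δ) (h₀ : ∀ x, r ≤ ‖E x 0 0‖ - δ * ‖E x 0 1‖)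
    (h₁ : ∀ x, ‖E x 1 0‖ + δ * ‖E x 1 1‖ ≤ δ * r) (k : ℕ) (x : ℝ) (v : Fin 2 → ℂ)
    (hv : ‖v 1‖ ≤ δ * ‖v 0‖) : r ^ k * ‖v 0‖ ≤ ‖(cocycleIter E β k x).mulVec v 0‖ := by
  induction k generalizing x v with
  | zero => simp [cocycleIter]
  | succ k ih =>
    have hw₀ : r * ‖v 0‖ ≤ ‖(E x).mulVec v 0‖ := by
      have e : (E x).mulVec v 0 = E x 0 0 * v 0 + E x 0 1 * v 1 := by
        simp [Matrix.mulVec, dotProduct, Fin.sum_univ_two]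
      have t := norm_sub_le_norm_add (E x 0 0 * v 0) (E x 0 1 * v 1)
      rw [norm_mul, norm_mul] at t
      rw [e]
      nlinarith [mul_le_mul_of_nonneg_left hv (norm_nonneg (E x 0 1)),
        mul_le_mul_of_nonneg_right (h₀ x) (norm_nonneg (v 0))]
    have hw₁ : ‖(E x).mulVec v 1‖ ≤ δ * ‖(E x).mulVec v 0‖ := by
      have e : (E x).mulVec v 1 = E x 1 0 * v 0 + E x 1 1 * v 1 := by
        simp [Matrix.mulVec, dotProduct, Fin.sum_univ_two]
      have t := norm_add_le (E x 1 0 * v 0) (E x 1 1 * v 1)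
      rw [norm_mul, norm_mul, ← e] at t
      nlinarith [mul_le_mul_of_nonneg_left hv (norm_nonneg (E x 1 1)),
        mul_le_mul_of_nonneg_right (h₁ x) (norm_nonneg (v 0)),
        mul_le_mul_of_nonneg_left hw₀ hδ]
    have := ih (x + β) ((E x).mulVec v) hw₁
    rw [Matrix.mulVec_mulVec] at this
    calc r ^ (k + 1) * ‖v 0‖ = r ^ k * (r * ‖v 0‖) := by ring
      _ ≤ r ^ k * ‖(E x).mulVec v 0‖ := mul_le_mul_of_nonneg_left hw₀ (pow_nonneg hr k)
      _ ≤ _ := this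

lemma cocycleIter_conj {D : ℝ → Matrix (Fin 2) (Fin 2) ℂ} {U V : Matrix (Fin 2) (Fin 2) ℂ}
    (hUV : U * V = 1) (hVU : V * U = 1) (β : ℝ) (k : ℕ) (x : ℝ) :
    cocycleIter (fun y => V * D y * U) β k x = V * cocycleIter D β k x * U := by
  induction k generalizing x with
  | zero => simp [cocycleIter, hVU]
  | succ k ih =>
    simp only [cocycleIter, ih]
    calc V * cocycleIter D β k (x + β) * U * (V * D x * U)
        = V * cocycleIter D β k (x + β) * (U * V) * D x * U := by noncomm_ring
      _ = _ := by rw [hUV]; noncomm_ring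

lemma norm_det_le_sq_frobenius_norm (M : Matrix (Fin 2) (Fin 2) ℂ) : ‖M.det‖ ≤ ‖M‖ ^ 2 := by
  have hsq : ‖M‖ ^ 2 = ‖M 0 0‖ ^ 2 + ‖M 0 1‖ ^ 2 + (‖M 1 0‖ ^ 2 + ‖M 1 1‖ ^ 2) := by
    rw [Matrix.frobenius_norm_def, ← Real.sqrt_eq_rpow, Real.sq_sqrt (by positivity)]
    simp [Fin.sum_univ_two]
  rw [hsq, Matrix.det_fin_two]
  have t := norm_sub_le (M 0 0 * M 1 1) (M 0 1 * M 1 0)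
  rw [norm_mul, norm_mul] at t
  nlinarith [sq_nonneg (‖M 0 0‖ - ‖M 1 1‖), sq_nonneg (‖M 0 1‖ - ‖M 1 0‖), sq_nonneg ‖M 0 0‖,
    sq_nonneg ‖M 0 1‖, sq_nonneg ‖M 1 0‖, sq_nonneg ‖M 1 1‖]

lemma pow_le_norm_cocycleIter_of_det {D : ℝ → Matrix (Fin 2) (Fin 2) ℂ} {r : ℝ}
    (h : ∀ x, r ^ 2 ≤ ‖(D x).det‖) (β : ℝ) (k : ℕ) (x : ℝ) :
    r ^ k ≤ ‖cocycleIter D β k x‖ := by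
  have hdet : (r ^ k) ^ 2 ≤ ‖(cocycleIter D β k x).det‖ := by
    induction k generalizing x with
    | zero => simp [cocycleIter]
    | succ k ih =>
      rw [cocycleIter, Matrix.det_mul, norm_mul]
      calc (r ^ (k + 1)) ^ 2 = (r ^ k) ^ 2 * r ^ 2 := by ring
        _ ≤ _ := mul_le_mul (ih _) (h x) (by positivity) (norm_nonneg _)
  exact le_of_sq_le_sq (hdet.trans (norm_det_le_sq_frobenius_norm _)) (norm_nonneg _)

lemma norm_conj_apply_le {U : Matrix (Fin 2) (Fin 2) ℂ} (hU : U.conjTranspose * U = 1)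
    (M : Matrix (Fin 2) (Fin 2) ℂ) (i : Fin 2) :
    ‖(U.conjTranspose * M * U) i i‖ ≤ ‖M‖ := by
  set c : Matrix (Fin 2) (Fin 1) ℂ := Matrix.replicateCol (Fin 1) (U.col i) with hc
  have hnorm : ‖c‖ = 1 := by
    have h1 : (U.conjTranspose * U) i i = 1 := by rw [hU]; simp
    refine (Matrix.frobenius_norm_replicateCol (ι := Fin 1) (U.col i)).trans ?_
    rw [EuclideanSpace.norm_eq, Real.sqrt_eq_one]
    simp only [Matrix.mul_apply, Matrix.conjTranspose_apply, RCLike.star_def,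
      Complex.conj_mul'] at h1
    exact_mod_cast h1
  have hentry : (U.conjTranspose * M * U) i i = (c.conjTranspose * M * c) 0 0 := by
    simp [Matrix.mul_apply, hc]
  have hle : ‖(c.conjTranspose * M * c) 0 0‖ = ‖c.conjTranspose * M * c‖ := by
    rw [Matrix.frobenius_norm_def, ← Real.sqrt_eq_rpow]
    simp
  rw [hentry, hle]
  calc ‖c.conjTranspose * M * c‖ ≤ ‖c.conjTranspose‖ * ‖M‖ * ‖c‖ :=
        (Matrix.frobenius_norm_mul _ _).trans
          (mul_le_mul_of_nonneg_right (Matrix.frobenius_norm_mul _ _) (norm_nonneg _))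
    _ = ‖M‖ := by rw [Matrix.frobenius_norm_conjTranspose, hnorm]; ring

/-- Schur triangulation of a `2 × 2` matrix with a prescribed eigenvalue in the corner. -/
lemma exists_unitary_conj_triangular {A : Matrix (Fin 2) (Fin 2) ℂ} {μ : ℂ}
    (hμ : μ ∈ spectrum ℂ A) : ∃ U : Matrix (Fin 2) (Fin 2) ℂ,
      U.conjTranspose * U = 1 ∧ (U.conjTranspose * A * U) 0 0 = μ ∧
      (U.conjTranspose * A * U) 1 0 = 0 := by
  have hdet : (algebraMap ℂ _ μ - A).det = 0 := by
    by_contra h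
    exact hμ ((Matrix.isUnit_iff_isUnit_det _).2 (isUnit_iff_ne_zero.2 h))
  obtain ⟨v, hv, hAv⟩ := Matrix.exists_mulVec_eq_zero_iff.2 hdet
  set s : ℝ := ‖WithLp.toLp 2 v‖ with hs
  have hs₀ : s ≠ 0 := by
    rw [hs, norm_ne_zero_iff]
    simpa using hv
  have hs₂ : (starRingEnd ℂ) (v 0) * v 0 + (starRingEnd ℂ) (v 1) * v 1 = (s : ℂ) ^ 2 := by
    rw [Complex.conj_mul', Complex.conj_mul']
    have := EuclideanSpace.norm_sq_eq (WithLp.toLp 2 v)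
    rw [Fin.sum_univ_two] at this
    exact_mod_cast this.symm
  have hsC : (s : ℂ) ≠ 0 := by exact_mod_cast hs₀
  have e₀ := congrFun hAv 0
  have e₁ := congrFun hAv 1
  simp [Matrix.mulVec, dotProduct, Fin.sum_univ_two, Matrix.algebraMap_matrix_apply] at e₀ e₁
  refine ⟨!![v 0 / s, -(starRingEnd ℂ) (v 1) / s; v 1 / s, (starRingEnd ℂ) (v 0) / s], ?_, ?_, ?_⟩
  · ext i j
    fin_cases i <;> fin_cases j <;>
      simp [Matrix.mul_apply, Fin.sum_univ_two] <;> field_simp <;>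
      first | linear_combination hs₂ | ring
  · simp [Matrix.mul_apply, Fin.sum_univ_two]
    field_simp
    linear_combination μ * hs₂ - (starRingEnd ℂ) (v 0) * e₀ - (starRingEnd ℂ) (v 1) * e₁
  · simp [Matrix.mul_apply, Fin.sum_univ_two]
    field_simp
    linear_combination v 1 * e₀ - v 0 * e₁

lemma eventually_pow_le_norm_cocycleIter {A : Matrix (Fin 2) (Fin 2) ℂ}
    {Dseq : ℕ → ℝ → Matrix (Fin 2) (Fin 2) ℂ}
    (h : Tendsto (fun q : ℕ × ℝ => Dseq q.1 q.2) (atTop ×ˢ ⊤) (nhds A)) {r : ℝ} (hr : 0 ≤ r)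
    (hrA : ENNReal.ofReal r < spectralRadius ℂ A) :
    ∀ᶠ n in atTop, ∀ β k x, r ^ k ≤ ‖cocycleIter (Dseq n) β k x‖ := by
  have eventually_forall {p : ℕ × ℝ → Prop} (hp : ∀ᶠ q in atTop ×ˢ ⊤, p q) :
      ∀ᶠ n in atTop, ∀ x, p (n, x) := by
    rw [prod_top, eventually_comap] at hp
    exact hp.mono fun n hn x => hn (n, x) rfl
  obtain ⟨μ, hμ, hμr⟩ : ∃ μ ∈ spectrum ℂ A, r < ‖μ‖ := by
    rw [spectralRadius] at hrA
    obtain ⟨μ, hμ⟩ := lt_iSup_iff.1 hrA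
    obtain ⟨hμ, hlt⟩ := lt_iSup_iff.1 hμ
    refine ⟨μ, hμ, ?_⟩
    rw [← enorm_eq_nnnorm, ← ofReal_norm] at hlt
    exact (ENNReal.ofReal_lt_ofReal_iff_of_nonneg hr).1 hlt
  obtain ⟨U, hU, h00, h10⟩ := exists_unitary_conj_triangular hμ
  set T := U.conjTranspose * A * U with hT
  have hU' : U * U.conjTranspose = 1 := mul_eq_one_comm.1 hU
  rcases le_or_gt ‖μ‖ ‖T 1 1‖ with hle | hlt
  · have hdet : r ^ 2 < ‖A.det‖ := by
      have e : A.det = T.det := by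
        rw [hT, Matrix.det_mul_right_comm, hU, one_mul]
      rw [e, Matrix.det_fin_two, h00, h10, mul_zero, sub_zero, norm_mul]
      nlinarith
    have hD : Tendsto (fun q : ℕ × ℝ => ‖(Dseq q.1 q.2).det‖) (atTop ×ˢ ⊤) (nhds ‖A.det‖) :=
      ((continuous_id.matrix_det.tendsto A).comp h).norm
    filter_upwards [eventually_forall (hD.eventually_const_lt hdet)] with n hn β k x
    exact pow_le_norm_cocycleIter_of_det (fun y => (hn y).le) β k x
  · obtain ⟨r', hr', hr'μ⟩ := exists_between (max_lt hμr hlt)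
    obtain ⟨hrr', hTr'⟩ := max_lt_iff.1 hr'
    have hr'₀ : 0 ≤ r' := hr.trans hrr'.le
    obtain ⟨δ, hδ, hδT⟩ : ∃ δ > 0, r' < ‖T 0 0‖ - δ * ‖T 0 1‖ := by
      have hlim : Tendsto (fun δ : ℝ => ‖T 0 0‖ - δ * ‖T 0 1‖) (nhdsWithin 0 (Set.Ioi 0))
          (nhds (‖T 0 0‖ - 0 * ‖T 0 1‖)) :=
        (Continuous.tendsto (by fun_prop) 0).mono_left nhdsWithin_le_nhds
      rw [zero_mul, sub_zero, h00] at hlim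
      obtain ⟨δ, h1, h2⟩ :=
        ((hlim.eventually_const_lt hr'μ).and self_mem_nhdsWithin).exists
      exact ⟨δ, h2, by rwa [h00]⟩
    have hE : Tendsto (fun q : ℕ × ℝ => U.conjTranspose * Dseq q.1 q.2 * U) (atTop ×ˢ ⊤)
        (nhds T) := (tendsto_const_nhds.mul h).mul tendsto_const_nhds
    have hEij (i j : Fin 2) : Tendsto
        (fun q : ℕ × ℝ => ‖(U.conjTranspose * Dseq q.1 q.2 * U) i j‖) (atTop ×ˢ ⊤)
        (nhds ‖T i j‖) := (((continuous_id.matrix_elem i j).tendsto T).comp hE).norm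
    have hδT' : ‖T 1 0‖ + δ * ‖T 1 1‖ < δ * r' := by
      rw [h10, norm_zero, zero_add]
      exact mul_lt_mul_of_pos_left hTr' hδ
    filter_upwards [eventually_forall
        (((hEij 0 0).sub ((hEij 0 1).const_mul δ)).eventually_const_lt hδT),
      eventually_forall
        (((hEij 1 0).add ((hEij 1 1).const_mul δ)).eventually_lt_const hδT')] with n h₀ h₁ β k x
    have hcone := pow_mul_norm_le_of_cone (β := β) hr'₀ hδ.le (fun y => (h₀ y).le)
      (fun y => (h₁ y).le) k x (Pi.single 0 1) (by simp [hδ.le])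
    rw [cocycleIter_conj hU' hU] at hcone
    simp only [Pi.single_eq_same, norm_one, mul_one, Matrix.mulVec_single_one,
      Matrix.col_apply] at hcone
    exact (pow_le_pow_left₀ hr hrr'.le k).trans (hcone.trans (norm_conj_apply_le hU _ 0))

/-- Joint continuity of the Lyapunov exponent at any constant cocycle,
for arbitrary frequency: if `βₙ → β₀` and `Dₙ → A` uniformly (each `Dₙ` continuous and
1-periodic, `A ∈ M₂(ℂ)` constant), then `L(βₙ, Dₙ) → log ρ(A)` in `ℝ ∪ {-∞}`,
where `ρ(A)` is the spectral radius of `A` and `log 0 := -∞`. -/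
theorem lyapunov_continuous_at_constant
    (A : Matrix (Fin 2) (Fin 2) ℂ) (β₀ : ℝ) (βseq : ℕ → ℝ)
    (Dseq : ℕ → ℝ → Matrix (Fin 2) (Fin 2) ℂ)
    (hDn : ∀ n, Continuous (Dseq n)) (hDnper : ∀ n, Function.Periodic (Dseq n) 1)
    (hβ : Tendsto βseq atTop (nhds β₀))
    (hunif : TendstoUniformly Dseq (fun _ => A) atTop) :
    Tendsto (fun n => lyapunov (βseq n) (Dseq n)) atTop
      (nhds (if spectralRadius ℂ A = 0 then (⊥ : EReal)
        else ((Real.log (spectralRadius ℂ A).toReal : ℝ) : EReal))) := by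
  have hD : Tendsto (fun q : ℕ × ℝ => Dseq q.1 q.2) (atTop ×ˢ ⊤) (nhds A) := by
    rw [tendstoUniformly_iff_tendsto] at hunif
    exact Uniform.tendsto_nhds_right.2 hunif
  have hfin := spectralRadius_ne_top A
  refine tendsto_order.2 ⟨fun a ha => ?_, fun a ha => ?_⟩
  · split_ifs at ha with hA
    · exact absurd ha not_lt_bot
    · obtain ⟨c, hac, hc⟩ := EReal.lt_iff_exists_real_btwn.1 ha
      have hexp : ENNReal.ofReal (Real.exp c) < spectralRadius ℂ A := by
        rw [ENNReal.ofReal_lt_iff_lt_toReal (Real.exp_pos c).le hfin]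
        exact (Real.lt_log_iff_exp_lt (ENNReal.toReal_pos hA hfin)).1 (EReal.coe_lt_coe_iff.1 hc)
      filter_upwards [eventually_pow_le_norm_cocycleIter hD (Real.exp_pos c).le hexp] with n hn
      exact hac.trans_le (le_lyapunov_of_exp_pow_le (hn (βseq n)))
  · obtain ⟨c, hc, hca⟩ := EReal.lt_iff_exists_real_btwn.1 ha
    have hexp : spectralRadius ℂ A < ENNReal.ofReal (Real.exp c) := by
      split_ifs at hc with hA
      · rw [hA]
        exact ENNReal.ofReal_pos.2 (Real.exp_pos c)
      · rw [ENNReal.lt_ofReal_iff_toReal_lt hfin]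
        exact (Real.log_lt_iff_lt_exp (ENNReal.toReal_pos hA hfin)).1 (EReal.coe_lt_coe_iff.1 hc)
    obtain ⟨k, hk⟩ := exists_norm_pow_lt_of_spectralRadius_lt hexp
    have hev := ((continuous_norm.tendsto (A ^ (k + 1))).comp
      (tendsto_cocycleIter (βseq := βseq) hD (k + 1))).eventually_lt_const hk
    rw [prod_top, eventually_comap] at hev
    filter_upwards [hev] with n hn
    have hle (x : ℝ) : ‖cocycleIter (Dseq n) (βseq n) (k + 1) x‖ ≤ Real.exp c ^ (k + 1) :=
      le_of_lt (hn (n, x) rfl)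
    exact (lyapunov_le_of_le_exp_pow k hle).trans_lt hca
end
end
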